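/- arXiv:1904.03313 — 2 statements merged into one kernel-verified Lean document; each statement's English description precedes it below -/
import Mathlib

section
/- Let (G_n) be any sequence of finite graphs with |V_n| = n and let f : X → ℝ. Define the decoupled estimator X̂^dec with entries X̂^dec_{uv} = E[f(θ_u)|Y^{(ε)}_{G_n}] · E[f(θ_v)|Y^{(ε)}_{G_n}]. Then for Lebesgue-almost every ε ∈ (0,1): lim_{n→∞} ( R_n(X̂^dec; f) − R_n^Bayes(f) ) = 0. -/
open MeasureTheory ProbabilityTheory Filter
open scoped ENNReal Classical

noncomputable section

def gball {V : Type*} (G : SimpleGraph V) (u : V) (l : ℕ) : Set V :=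
  {v | ∃ w : G.Walk u v, w.length ≤ l}

def vBoundary {V : Type*} (G : SimpleGraph V) (S : Set V) : Set V :=
  {u | u ∈ S ∧ ∃ v, v ∉ S ∧ G.Adj u v}

def Amenable {V : Type*} (G : SimpleGraph V) : Prop :=
  ∀ δ : ℝ, 0 < δ → ∃ S : Set V, S.Finite ∧ S.Nonempty ∧
    ((vBoundary G S).ncard : ℝ) < δ * (S.ncard : ℝ)

def VertexTransitive {V : Type*} (G : SimpleGraph V) : Prop :=
  ∀ u v : V, ∃ φ : G ≃g G, φ u = v

def LocallyFiniteGraph {V : Type*} (G : SimpleGraph V) : Prop :=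
  ∀ v : V, (G.neighborSet v).Finite

def graphOf {V : Type*} (E : Set (V × V)) : SimpleGraph V :=
  SimpleGraph.fromRel (fun u v => (u, v) ∈ E)

def BallIso {V W : Type*} (G : SimpleGraph V) (u : V) (H : SimpleGraph W) (o : W)
    (l : ℕ) : Prop :=
  ∃ φ : gball G u l ≃ gball H o l,
    (∀ hu : u ∈ gball G u l, ((φ ⟨u, hu⟩ : gball H o l) : W) = o) ∧
      ∀ a b : gball G u l, G.Adj a b ↔ H.Adj (φ a) (φ b)

def LocalWeakLimit {W : Type*} (Gn : ∀ n : ℕ, SimpleGraph (Fin n))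
    (H : SimpleGraph W) (o : W) : Prop :=
  ∀ l : ℕ, Tendsto
    (fun n : ℕ => (Nat.card {u : Fin n // BallIso (Gn n) u H o l} : ℝ) / n) atTop (nhds 1)

structure Model (X Y' : Type*) {V : Type*} (Q : X → X → Y' → ℝ) (E : Set (V × V))
    [Fintype X] [Fintype Y'] where
  Ω : Type
  mΩ : MeasurableSpace Ω
  P : @Measure Ω mΩ
  probP : @IsProbabilityMeasure Ω mΩ P
  θ : V → Ω → X
  Yobs : V × V → Ω → Y'
  U : V → Ω → ℝ
  measθ : ∀ v, @Measurable Ω X mΩ ⊤ (θ v)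
  measY : ∀ e, @Measurable Ω Y' mΩ ⊤ (Yobs e)
  measU : ∀ v, @Measurable Ω ℝ mΩ _ (U v)
  lawθY : ∀ (S : Finset V) (F : Finset (V × V)),
    (∀ e ∈ F, e ∈ E ∧ e.1 ∈ S ∧ e.2 ∈ S) →
    ∀ (σ : V → X) (y : V × V → Y'),
      (P {ω | (∀ v ∈ S, θ v ω = σ v) ∧ ∀ e ∈ F, Yobs e ω = y e}).toReal
        = ((Fintype.card X : ℝ)⁻¹) ^ S.card * ∏ e ∈ F, Q (σ e.1) (σ e.2) (y e)
  lawU : ∀ (T : Finset V) (a : V → ℝ), (∀ v, a v ∈ Set.Icc (0:ℝ) 1) →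
    ∀ (S : Finset V) (F : Finset (V × V)) (σ : V → X) (y : V × V → Y'),
      (P {ω | (∀ v ∈ T, U v ω ≤ a v) ∧ (∀ v ∈ S, θ v ω = σ v) ∧
          ∀ e ∈ F, Yobs e ω = y e}).toReal
        = (∏ v ∈ T, a v) *
          (P {ω | (∀ v ∈ S, θ v ω = σ v) ∧ ∀ e ∈ F, Yobs e ω = y e}).toReal

attribute [instance] Model.mΩ

namespace Model

variable {X Y' V : Type*} [Fintype X] [Fintype Y'] {Q : X → X → Y' → ℝ} {E : Set (V × V)}

def ξ (M : Model X Y' Q E) (ε : ℝ) (v : V) (ω : M.Ω) : Option X :=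
  if M.U v ω ≤ ε then some (M.θ v ω) else none

def obsAlg (M : Model X Y' Q E) (ε : ℝ) (S : Set V) : MeasurableSpace M.Ω :=
  (⨆ e ∈ {e : V × V | e ∈ E ∧ e.1 ∈ S ∧ e.2 ∈ S}, MeasurableSpace.comap (M.Yobs e) ⊤) ⊔
    ⨆ v ∈ S, MeasurableSpace.comap (M.ξ ε v) ⊤

def marg (M : Model X Y' Q E) (ε : ℝ) (S : Set V) (u : V) (x : X) : M.Ω → ℝ :=
  M.P[Set.indicator {ω | M.θ u ω = x} (fun _ => (1 : ℝ)) | M.obsAlg ε S]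

end Model

def riskOf {X Y' : Type*} [Fintype X] [Fintype Y'] {n : ℕ} {Q : X → X → Y' → ℝ}
    {E : Set (Fin n × Fin n)} (M : Model X Y' Q E) (f : X → ℝ)
    (Xh : M.Ω → Fin n → Fin n → ℝ) : ℝ :=
  ((n : ℝ) ^ 2)⁻¹ * ∫ ω, (∑ u, ∑ v, (f (M.θ u ω) * f (M.θ v ω) - Xh ω u v) ^ 2) ∂M.P

theorem setIntegral_eq_of_indep {Ω : Type*} {m₁ m₂ mΩ : MeasurableSpace Ω} {μ : Measure Ω}
    [IsProbabilityMeasure μ] (h₁ : m₁ ≤ mΩ) (h₂ : m₂ ≤ mΩ) (hind : Indep m₁ m₂ μ)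
    {f : Ω → ℝ} (hf : StronglyMeasurable[m₁] f) (hfi : Integrable f μ) {A : Set Ω}
    (hA : MeasurableSet[m₂] A) : ∫ ω in A, f ω ∂μ = μ.real A * ∫ ω, f ω ∂μ := by
  rw [← setIntegral_condExp h₂ hfi hA,
    setIntegral_congr_ae (g := fun _ => ∫ ω, f ω ∂μ) (h₂ _ hA)
      ((condExp_indep_eq h₁ h₂ hf hind).mono fun _ h _ => h),
    setIntegral_const, smul_eq_mul]

theorem condExp_sup_ae_eq_of_indep {Ω : Type*} {m₁ m₂ m mΩ : MeasurableSpace Ω} {μ : Measure Ω}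
    [IsProbabilityMeasure μ] (hm₁ : m₁ ≤ m) (hm : m ≤ mΩ) (h₂ : m₂ ≤ mΩ) (hind : Indep m m₂ μ)
    {f : Ω → ℝ} (hf : StronglyMeasurable[m] f) (hfi : Integrable f μ) :
    μ[f | m₁ ⊔ m₂] =ᵐ[μ] μ[f | m₁] := by
  have hsup : m₁ ⊔ m₂ ≤ mΩ := sup_le (hm₁.trans hm) h₂
  have hsm : StronglyMeasurable[m₁ ⊔ m₂] (μ[f | m₁]) :=
    stronglyMeasurable_condExp.mono le_sup_left
  refine (ae_eq_condExp_of_forall_setIntegral_eq hsup hfi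
    (fun _ _ _ => integrable_condExp.integrableOn) (fun s hs _ => ?_)
    hsm.aestronglyMeasurable).symm
  have hgen : m₁ ⊔ m₂ = MeasurableSpace.generateFrom
      (Set.image2 (· ∩ ·) {s | MeasurableSet[m₁] s} {s | MeasurableSet[m₂] s}) := by
    refine le_antisymm (sup_le ?_ ?_) (MeasurableSpace.generateFrom_le ?_)
    · exact fun a ha => MeasurableSpace.measurableSet_generateFrom
        ⟨a, ha, Set.univ, MeasurableSet.univ, Set.inter_univ a⟩
    · exact fun b hb => MeasurableSpace.measurableSet_generateFrom
        ⟨Set.univ, MeasurableSet.univ, b, hb, Set.univ_inter b⟩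
    · rintro _ ⟨a, ha, b, hb, rfl⟩
      exact MeasurableSet.inter ((le_sup_left : m₁ ≤ m₁ ⊔ m₂) _ ha)
        ((le_sup_right : m₂ ≤ m₁ ⊔ m₂) _ hb)
  have hpi : IsPiSystem
      (Set.image2 (· ∩ ·) {s | MeasurableSet[m₁] s} {s | MeasurableSet[m₂] s}) := by
    rintro _ ⟨a, ha, b, hb, rfl⟩ _ ⟨c, hc, d, hd, rfl⟩ -
    exact ⟨a ∩ c, ha.inter hc, b ∩ d, hb.inter hd, Set.inter_inter_inter_comm a c b d⟩
  induction s, hs using MeasurableSpace.induction_on_inter hgen hpi with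
  | empty => simp
  | basic t ht =>
    obtain ⟨a, ha, b, hb, rfl⟩ := ht
    have key : ∀ g : Ω → ℝ, StronglyMeasurable[m] g → Integrable g μ →
        ∫ ω in a ∩ b, g ω ∂μ = μ.real b * ∫ ω in a, g ω ∂μ := by
      intro g hg hgi
      rw [Set.inter_comm, ← setIntegral_indicator (hm _ (hm₁ _ ha)),
        setIntegral_eq_of_indep hm h₂ hind (hg.indicator (hm₁ _ ha))
          (hgi.indicator (hm _ (hm₁ _ ha))) hb, integral_indicator (hm _ (hm₁ _ ha))]
    rw [key _ (stronglyMeasurable_condExp.mono hm₁) integrable_condExp, key _ hf hfi,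
      setIntegral_condExp (hm₁.trans hm) hfi ha]
  | compl t ht ih =>
    have h1 := integral_add_compl (hsup _ ht) (integrable_condExp (m := m₁) (f := f) (μ := μ))
    have h2 := integral_add_compl (hsup _ ht) hfi
    rw [integral_condExp (hm₁.trans hm)] at h1
    linarith [ih (measure_lt_top μ t)]
  | iUnion s hd hs ih =>
    rw [integral_iUnion (fun i => hsup _ (hs i)) hd integrable_condExp.integrableOn,
      integral_iUnion (fun i => hsup _ (hs i)) hd hfi.integrableOn]
    exact tsum_congr fun i => ih i (measure_lt_top μ _)

theorem MeasureTheory.MemLp.mul_top {Ω : Type*} {mΩ : MeasurableSpace Ω} {μ : Measure Ω}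
    {f g : Ω → ℝ} (hf : MemLp f ⊤ μ) (hg : MemLp g ⊤ μ) : MemLp (f * g) ⊤ μ :=
  hg.mul (p := ⊤) (q := ⊤) hf

theorem integral_mul_eq_integral_condExp_mul {Ω : Type*} {m mΩ : MeasurableSpace Ω}
    {μ : Measure Ω} [IsProbabilityMeasure μ] (hm : m ≤ mΩ) {p k : Ω → ℝ} (hp : MemLp p ⊤ μ)
    (hk : MemLp k ⊤ μ) (hkm : AEStronglyMeasurable[m] k μ) :
    ∫ ω, p ω * k ω ∂μ = ∫ ω, (μ[p | m]) ω * k ω ∂μ := by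
  have h := condExp_mul_of_aestronglyMeasurable_right hkm ((hp.mul_top hk).integrable le_top)
    (hp.integrable le_top)
  rw [← integral_condExp hm (f := fun ω => p ω * k ω)]
  exact integral_congr_ae h

theorem integral_sq_sub_condExp {Ω : Type*} {m mΩ : MeasurableSpace Ω}
    {μ : Measure Ω} [IsProbabilityMeasure μ] (hm : m ≤ mΩ) {p k : Ω → ℝ} (hp : MemLp p ⊤ μ)
    (hk : MemLp k ⊤ μ) (hkm : AEStronglyMeasurable[m] k μ) :
    ∫ ω, (p ω - k ω) ^ 2 ∂μ - ∫ ω, (p ω - (μ[p | m]) ω) ^ 2 ∂μ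
      = ∫ ω, ((μ[p | m]) ω - k ω) ^ 2 ∂μ := by
  have hc : MemLp (μ[p | m]) ⊤ μ := hp.condExp le_top
  have hck := hc.sub hk
  have h := integral_mul_eq_integral_condExp_mul hm hp hck
    (stronglyMeasurable_condExp.aestronglyMeasurable.sub hkm)
  have i1 : Integrable (fun ω => (p ω - k ω) ^ 2) μ := by
    simpa [pow_two] using! ((hp.sub hk).mul_top (hp.sub hk)).integrable le_top
  have i2 : Integrable (fun ω => (p ω - (μ[p | m]) ω) ^ 2) μ := by
    simpa [pow_two] using! ((hp.sub hc).mul_top (hp.sub hc)).integrable le_top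
  have i3 : Integrable (fun ω => ((μ[p | m]) ω - k ω) ^ 2) μ := by
    simpa [pow_two] using! (hck.mul_top hck).integrable le_top
  have i4 : Integrable (fun ω => p ω * (μ[p | m] - k) ω) μ := (hp.mul_top hck).integrable le_top
  have i5 : Integrable (fun ω => (μ[p | m]) ω * (μ[p | m] - k) ω) μ :=
    (hc.mul_top hck).integrable le_top
  have i12 : Integrable (fun ω => (p ω - k ω) ^ 2 - (p ω - (μ[p | m]) ω) ^ 2) μ := i1.sub i2
  rw [← integral_sub i1 i2, ← sub_eq_zero, ← integral_sub i12 i3]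
  have h' := sub_eq_zero.2 h
  rw [← integral_sub i4 i5] at h'
  rw [← mul_zero (2 : ℝ), ← h', ← integral_const_mul]
  congr 1 with ω
  simp only [Pi.sub_apply]
  ring

theorem integral_sq_condExp_le {Ω : Type*} {m mΩ : MeasurableSpace Ω}
    {μ : Measure Ω} [IsProbabilityMeasure μ] (hm : m ≤ mΩ) {p : Ω → ℝ} (hp : MemLp p ⊤ μ) :
    ∫ ω, ((μ[p | m]) ω) ^ 2 ∂μ ≤ ∫ ω, (p ω) ^ 2 ∂μ := by
  have h := integral_sq_sub_condExp hm hp (MemLp.zero (ε := ℝ)) aestronglyMeasurable_const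
  simp only [Pi.zero_apply, sub_zero] at h
  have : 0 ≤ ∫ ω, (p ω - (μ[p | m]) ω) ^ 2 ∂μ := integral_nonneg fun _ => sq_nonneg _
  linarith

/-- Conditional covariance given `m` is controlled by the gain in explained variance when passing
to a finer `σ`-algebra for which one of the two variables is measurable. -/
theorem integral_sq_condCov_le {Ω : Type*} {m m' mΩ : MeasurableSpace Ω}
    {μ : Measure Ω} [IsProbabilityMeasure μ] (hmm : m ≤ m') (hm' : m' ≤ mΩ) {φ f : Ω → ℝ} {B : ℝ}
    (hφm : StronglyMeasurable[m'] φ) (hφ : MemLp φ ⊤ μ) (hf : MemLp f ⊤ μ)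
    (hB : ∀ ω, φ ω ^ 2 ≤ B) :
    ∫ ω, ((μ[φ * f | m]) ω - (μ[φ | m]) ω * (μ[f | m]) ω) ^ 2 ∂μ
      ≤ B * (∫ ω, ((μ[f | m']) ω) ^ 2 ∂μ - ∫ ω, ((μ[f | m]) ω) ^ 2 ∂μ) := by
  have hm := hmm.trans hm'
  have hK : MemLp (μ[f | m']) ⊤ μ := hf.condExp le_top
  have hG : MemLp (μ[f | m]) ⊤ μ := hf.condExp le_top
  have hD := hK.sub hG
  have tower : μ[μ[f | m'] | m] =ᵐ[μ] μ[f | m] := condExp_condExp_of_le hmm hm'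
  have e1 : μ[φ * f | m] =ᵐ[μ] μ[φ * μ[f | m'] | m] :=
    (condExp_condExp_of_le hmm hm').symm.trans (condExp_congr_ae
      (condExp_mul_of_stronglyMeasurable_left hφm ((hφ.mul_top hf).integrable le_top)
        (hf.integrable le_top)))
  have e2 : μ[φ * μ[f | m] | m] =ᵐ[μ] μ[φ | m] * μ[f | m] :=
    condExp_mul_of_stronglyMeasurable_right stronglyMeasurable_condExp
      ((hφ.mul_top hG).integrable le_top) (hφ.integrable le_top)
  have e3 : μ[φ * (μ[f | m'] - μ[f | m]) | m] =ᵐ[μ] μ[φ * f | m] - μ[φ | m] * μ[f | m] := by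
    rw [mul_sub]
    exact (condExp_sub ((hφ.mul_top hK).integrable le_top) ((hφ.mul_top hG).integrable le_top)
      m).trans (e1.symm.sub e2)
  have iD : Integrable (fun ω => ((μ[f | m'] - μ[f | m]) ω) ^ 2) μ := by
    simpa [pow_two] using! (hD.mul_top hD).integrable le_top
  have iφD : Integrable (fun ω => ((φ * (μ[f | m'] - μ[f | m])) ω) ^ 2) μ := by
    simpa [pow_two] using!
      ((hφ.mul_top hD).mul_top (hφ.mul_top hD)).integrable le_top
  have pyth : ∫ ω, ((μ[f | m'] - μ[f | m]) ω) ^ 2 ∂μ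
      = ∫ ω, ((μ[f | m']) ω) ^ 2 ∂μ - ∫ ω, ((μ[f | m]) ω) ^ 2 ∂μ := by
    have h := integral_sq_sub_condExp hm hK (MemLp.zero (ε := ℝ)) aestronglyMeasurable_const
    simp only [Pi.zero_apply, sub_zero] at h
    rw [integral_congr_ae (f := fun ω => (μ[f | m'] ω - μ[μ[f | m'] | m] ω) ^ 2)
        (g := fun ω => ((μ[f | m'] - μ[f | m]) ω) ^ 2)
        (by filter_upwards [tower] with ω h; simp [h]),
      integral_congr_ae (f := fun ω => (μ[μ[f | m'] | m] ω) ^ 2)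
        (g := fun ω => ((μ[f | m]) ω) ^ 2)
        (by filter_upwards [tower] with ω h; simp [h])] at h
    linarith
  calc ∫ ω, ((μ[φ * f | m]) ω - (μ[φ | m]) ω * (μ[f | m]) ω) ^ 2 ∂μ
      = ∫ ω, ((μ[φ * (μ[f | m'] - μ[f | m]) | m]) ω) ^ 2 ∂μ := by
        refine integral_congr_ae ?_
        filter_upwards [e3] with ω h
        simp [h]
    _ ≤ ∫ ω, ((φ * (μ[f | m'] - μ[f | m])) ω) ^ 2 ∂μ :=
        integral_sq_condExp_le hm (hφ.mul_top hD)
    _ ≤ ∫ ω, B * ((μ[f | m'] - μ[f | m]) ω) ^ 2 ∂μ := by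
        refine integral_mono iφD (iD.const_mul B) fun ω => ?_
        simp only [Pi.mul_apply, mul_pow]
        exact mul_le_mul_of_nonneg_right (hB ω) (sq_nonneg _)
    _ = _ := by rw [integral_const_mul, pyth]

/-- If `m` and `m₁ ⊔ σ(A)` have the same trace on `A`, and `A` is independent of `m₁` and `f`, then
biasing by `A` measures the gain in explained variance from `m` to `m₁ ⊔ σ(A)`. -/
theorem integral_sq_condExp_mul_indicator {Ω : Type*} {m m₁ m₂ mΩ : MeasurableSpace Ω}
    {μ : Measure Ω} [IsProbabilityMeasure μ] {A : Set Ω} (hm : m ≤ mΩ) (hm₁ : m₁ ≤ m₂)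
    (hm₂ : m₂ ≤ mΩ) (hA : MeasurableSet A)
    (hind : Indep m₂ (MeasurableSpace.generateFrom {A}) μ)
    (hAm : MeasurableSet[m] A) (hle : m ≤ m₁ ⊔ MeasurableSpace.generateFrom {A})
    (htr : ∀ t, MeasurableSet[m₁ ⊔ MeasurableSpace.generateFrom {A}] t → MeasurableSet[m] (A ∩ t))
    {f : Ω → ℝ} (hfm : StronglyMeasurable[m₂] f) (hf : MemLp f ⊤ μ) :
    ∫ ω, ((μ[f | m]) ω) ^ 2 * (A.indicator 1 ω - μ.real A) ∂μ
      = μ.real A * (∫ ω, ((μ[f | m₁ ⊔ MeasurableSpace.generateFrom {A}]) ω) ^ 2 ∂μ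
          - ∫ ω, ((μ[f | m]) ω) ^ 2 ∂μ) := by
  have hgA : MeasurableSpace.generateFrom {A} ≤ mΩ :=
    MeasurableSpace.generateFrom_le (by rintro _ rfl; exact hA)
  have hsup : m₁ ⊔ MeasurableSpace.generateFrom {A} ≤ mΩ := sup_le (hm₁.trans hm₂) hgA
  have hG : MemLp (μ[f | m]) ⊤ μ := hf.condExp le_top
  have hH : MemLp (μ[f | m₁]) ⊤ μ := hf.condExp le_top
  have iG : Integrable (fun ω => ((μ[f | m]) ω) ^ 2) μ := by
    simpa [pow_two] using! (hG.mul_top hG).integrable le_top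
  have iH : Integrable (fun ω => ((μ[f | m₁]) ω) ^ 2) μ := by
    simpa [pow_two] using! (hH.mul_top hH).integrable le_top
  have e1 := condExp_sup_ae_eq_of_indep hm₁ hm₂ hgA hind hfm (hf.integrable le_top)
  have e2 : μ[f | m] =ᵐ[μ.restrict A] μ[f | m₁ ⊔ MeasurableSpace.generateFrom {A}] :=
    condExp_ae_eq_restrict_of_measurableSpace_eq_on hm hsup hAm fun t =>
      ⟨fun h => hle _ h, fun h => by
        rw [← Set.inter_self A, Set.inter_assoc]; exact htr _ h⟩
  have e3 : ∫ ω in A, ((μ[f | m]) ω) ^ 2 ∂μ = ∫ ω in A, ((μ[f | m₁]) ω) ^ 2 ∂μ := by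
    refine integral_congr_ae ?_
    filter_upwards [e2, ae_restrict_of_ae e1] with ω h h'
    rw [h, h']
  have e4 := setIntegral_eq_of_indep hm₂ hgA hind
    (((stronglyMeasurable_condExp (f := f) (μ := μ)).mono hm₁).pow 2) iH
    (MeasurableSpace.measurableSet_generateFrom rfl)
  have e5 : ∫ ω, ((μ[f | m₁ ⊔ MeasurableSpace.generateFrom {A}]) ω) ^ 2 ∂μ
      = ∫ ω, ((μ[f | m₁]) ω) ^ 2 ∂μ :=
    integral_congr_ae (by filter_upwards [e1] with ω h; rw [h])
  have e6 : ∀ ω, ((μ[f | m]) ω) ^ 2 * (A.indicator 1 ω - μ.real A)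
      = A.indicator (fun ω => ((μ[f | m]) ω) ^ 2) ω - μ.real A * ((μ[f | m]) ω) ^ 2 := by
    intro ω
    by_cases h : ω ∈ A <;> simp [h] <;> ring
  simp_rw [e6]
  rw [integral_sub (iG.indicator hA) (iG.const_mul _), integral_indicator hA, integral_const_mul,
    e3, e5, mul_sub]
  congr 1

/-- The `σ`-algebra of sets whose trace on `A` is `m`-measurable. -/
@[reducible]
def traceAlg {Ω : Type*} (m : MeasurableSpace Ω) (A : Set Ω) (hA : MeasurableSet[m] A) :
    MeasurableSpace Ω where
  MeasurableSet' t := MeasurableSet[m] (A ∩ t)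
  measurableSet_empty := by simp
  measurableSet_compl t ht := by
    have : A ∩ tᶜ = A \ (A ∩ t) := by ext; simp
    rw [this]
    exact hA.diff ht
  measurableSet_iUnion s hs := by
    rw [Set.inter_iUnion]
    exact MeasurableSet.iUnion hs

namespace Model

section

variable {X Y' V : Type*} [Fintype X] [Fintype Y'] {Q : X → X → Y' → ℝ} {E : Set (V × V)}

/-- The event that the side information at `u` reveals the label. -/
def revealed (M : Model X Y' Q E) (ε : ℝ) (u : V) : Set M.Ω := {ω | M.U u ω ≤ ε}

/-- The observations other than the side information at `u`, together with the label of `u`. -/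
@[reducible]
def oracleAlg (M : Model X Y' Q E) (ε : ℝ) (u : V) : MeasurableSpace M.Ω :=
  ((⨆ e ∈ E, MeasurableSpace.comap (M.Yobs e) ⊤) ⊔
    ⨆ w ∈ {w | w ≠ u}, MeasurableSpace.comap (M.ξ ε w) ⊤) ⊔ MeasurableSpace.comap (M.θ u) ⊤

/-- Joint configurations of labels, edge observations, and revealed vertices other than `u`. -/
def cylinders (M : Model X Y' Q E) (ε : ℝ) (u : V) : Set (Set M.Ω) :=
  {s | ∃ (T : Finset V) (σ : V → X) (y : V × V → Y'), u ∉ T ∧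
    s = {ω | (∀ v ∈ T, M.U v ω ≤ ε) ∧ (∀ v, M.θ v ω = σ v) ∧ ∀ e, M.Yobs e ω = y e}}

theorem measurableSet_revealed (M : Model X Y' Q E) (ε : ℝ) (u : V) :
    MeasurableSet (M.revealed ε u) :=
  M.measU u measurableSet_Iic

theorem xi_eq_some_iff (M : Model X Y' Q E) (ε : ℝ) (u : V) (x : X) (ω : M.Ω) :
    M.ξ ε u ω = some x ↔ ω ∈ M.revealed ε u ∧ M.θ u ω = x := by
  unfold ξ revealed
  split_ifs with h <;> simp [h]

theorem xi_eq_none_iff (M : Model X Y' Q E) (ε : ℝ) (u : V) (ω : M.Ω) :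
    M.ξ ε u ω = none ↔ ω ∉ M.revealed ε u := by
  unfold ξ revealed
  split_ifs with h <;> simp [h]

theorem comap_xi_le (M : Model X Y' Q E) (ε : ℝ) (u : V) (m : MeasurableSpace M.Ω)
    (hA : MeasurableSet[m] (M.revealed ε u))
    (hθ : MeasurableSpace.comap (M.θ u) ⊤ ≤ m) :
    MeasurableSpace.comap (M.ξ ε u) ⊤ ≤ m := by
  rintro _ ⟨s, -, rfl⟩
  rw [← Set.biUnion_of_singleton s, Set.preimage_iUnion₂]
  refine MeasurableSet.biUnion s.to_countable fun o _ => ?_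
  cases o with
  | none =>
    have : M.ξ ε u ⁻¹' {none} = (M.revealed ε u)ᶜ := by
      ext ω; simp [xi_eq_none_iff]
    rw [this]
    exact hA.compl
  | some x =>
    have : M.ξ ε u ⁻¹' {some x} = M.revealed ε u ∩ M.θ u ⁻¹' {x} := by
      ext ω; simp [xi_eq_some_iff]
    rw [this]
    exact hA.inter (hθ _ ⟨_, trivial, rfl⟩)

theorem obsAlg_univ_le (M : Model X Y' Q E) (ε : ℝ) (m : MeasurableSpace M.Ω)
    (hY : ∀ e ∈ E, MeasurableSpace.comap (M.Yobs e) ⊤ ≤ m)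
    (hξ : ∀ v, MeasurableSpace.comap (M.ξ ε v) ⊤ ≤ m) : M.obsAlg ε Set.univ ≤ m :=
  sup_le (iSup₂_le fun e he => hY e he.1) (iSup₂_le fun v _ => hξ v)

theorem obsAlg_le (M : Model X Y' Q E) (ε : ℝ) : M.obsAlg ε Set.univ ≤ M.mΩ :=
  M.obsAlg_univ_le ε _ (fun e _ => (M.measY e).comap_le)
    fun v => M.comap_xi_le ε v _ (M.measurableSet_revealed ε v) (M.measθ v).comap_le

theorem comap_Yobs_le_obsAlg (M : Model X Y' Q E) (ε : ℝ) {e : V × V} (he : e ∈ E) :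
    MeasurableSpace.comap (M.Yobs e) ⊤ ≤ M.obsAlg ε Set.univ :=
  le_sup_of_le_left (le_iSup₂_of_le (f := fun e _ => MeasurableSpace.comap (M.Yobs e) ⊤) e
    ⟨he, trivial, trivial⟩ le_rfl)

theorem comap_xi_le_obsAlg (M : Model X Y' Q E) (ε : ℝ) (v : V) :
    MeasurableSpace.comap (M.ξ ε v) ⊤ ≤ M.obsAlg ε Set.univ :=
  le_sup_of_le_right (le_iSup₂_of_le (f := fun v _ => MeasurableSpace.comap (M.ξ ε v) ⊤) v
    trivial le_rfl)

theorem measurableSet_obsAlg_revealed (M : Model X Y' Q E) (ε : ℝ) (u : V) :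
    MeasurableSet[M.obsAlg ε Set.univ] (M.revealed ε u) := by
  refine M.comap_xi_le_obsAlg ε u _ ⟨{none}ᶜ, trivial, ?_⟩
  ext ω
  simp [xi_eq_none_iff]

theorem obsAlg_le_oracleAlg_sup (M : Model X Y' Q E) (ε : ℝ) (u : V) :
    M.obsAlg ε Set.univ ≤ M.oracleAlg ε u ⊔ MeasurableSpace.generateFrom {M.revealed ε u} := by
  refine M.obsAlg_univ_le ε _ (fun e he => ?_) fun v => ?_
  · exact le_sup_of_le_left (le_sup_of_le_left (le_sup_of_le_left
      (le_iSup₂_of_le (f := fun e _ => MeasurableSpace.comap (M.Yobs e) ⊤) e he le_rfl)))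
  · by_cases h : v = u
    · subst h
      exact M.comap_xi_le ε v _
        ((le_sup_right : _ ≤ M.oracleAlg ε v ⊔ _) _ (MeasurableSpace.measurableSet_generateFrom rfl))
        (le_sup_of_le_left le_sup_right)
    · exact le_sup_of_le_left (le_sup_of_le_left (le_sup_of_le_right
        (le_iSup₂_of_le (f := fun v _ => MeasurableSpace.comap (M.ξ ε v) ⊤) v h le_rfl)))

theorem oracleAlg_sup_le_traceAlg (M : Model X Y' Q E) (ε : ℝ) (u : V) :
    M.oracleAlg ε u ⊔ MeasurableSpace.generateFrom {M.revealed ε u}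
      ≤ traceAlg (M.obsAlg ε Set.univ) (M.revealed ε u) (M.measurableSet_obsAlg_revealed ε u) := by
  have hA := M.measurableSet_obsAlg_revealed ε u
  have hle : M.obsAlg ε Set.univ ≤ traceAlg (M.obsAlg ε Set.univ) (M.revealed ε u) hA :=
    fun t ht => hA.inter ht
  refine sup_le (sup_le (sup_le (iSup₂_le fun e he => ?_) (iSup₂_le fun w _ => ?_)) ?_)
    (MeasurableSpace.generateFrom_le ?_)
  · exact (M.comap_Yobs_le_obsAlg ε he).trans hle
  · exact (M.comap_xi_le_obsAlg ε w).trans hle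
  · rintro _ ⟨s, -, rfl⟩
    refine M.comap_xi_le_obsAlg ε u _ ⟨some '' s, trivial, ?_⟩
    ext ω
    simp only [Set.mem_preimage, Set.mem_image, Set.mem_inter_iff, eq_comm (b := M.ξ ε u ω),
      xi_eq_some_iff]
    grind
  · rintro _ rfl
    exact hle _ hA

theorem isPiSystem_cylinders (M : Model X Y' Q E) (ε : ℝ) (u : V) :
    IsPiSystem (M.cylinders ε u) := by
  rintro _ ⟨T, σ, y, hT, rfl⟩ _ ⟨T', σ', y', hT', rfl⟩ ⟨ω₀, ⟨-, hσ, hy⟩, -, hσ', hy'⟩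
  refine ⟨T ∪ T', σ, y, by simp [hT, hT'], ?_⟩
  ext ω
  simp only [Set.mem_inter_iff, Set.mem_ofPred_eq, Finset.mem_union]
  simp only [← hσ, ← hy, ← hσ', ← hy']
  grind

theorem measureReal_biInter_revealed (M : Model X Y' Q E) {ε : ℝ} (hε : ε ∈ Set.Icc (0 : ℝ) 1)
    (T : Finset V) : M.P.real {ω | ∀ v ∈ T, M.U v ω ≤ ε} = ε ^ T.card := by
  have := M.probP
  obtain ⟨ω₀⟩ : Nonempty M.Ω := nonempty_of_isProbabilityMeasure M.P
  have h := M.lawU T (fun _ => ε) (fun _ => hε) ∅ ∅ (fun v => M.θ v ω₀) (fun e => M.Yobs e ω₀)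
  simpa [measureReal_def] using h

theorem measureReal_revealed (M : Model X Y' Q E) {ε : ℝ} (hε : ε ∈ Set.Icc (0 : ℝ) 1)
    (u : V) : M.P.real (M.revealed ε u) = ε := by
  simpa using! M.measureReal_biInter_revealed hε {u}

theorem measureReal_revealed_inter (M : Model X Y' Q E) {ε : ℝ} (hε : ε ∈ Set.Icc (0 : ℝ) 1)
    {u v : V} (huv : u ≠ v) : M.P.real (M.revealed ε u ∩ M.revealed ε v) = ε ^ 2 := by
  have h := M.measureReal_biInter_revealed hε {u, v}
  rw [Finset.card_pair huv] at h
  rw [← h]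
  congr 1
  ext ω
  simp [revealed]

theorem memLp_comp_theta (M : Model X Y' Q E) (f : X → ℝ) (v : V) :
    MemLp (fun ω => f (M.θ v ω)) ⊤ M.P := by
  have := M.probP
  obtain ⟨R, hR⟩ := Finite.exists_le fun x => ‖f x‖
  refine memLp_top_of_bound ?_ R (.of_forall fun ω => hR _)
  let _ : MeasurableSpace X := ⊤
  exact ((measurable_from_top (f := f)).comp (M.measθ v)).aestronglyMeasurable

theorem integral_centered_mul_le (M : Model X Y' Q E) {ε : ℝ} (hε : ε ∈ Set.Icc (0 : ℝ) 1)
    (u v : V) : ∫ ω, ((M.revealed ε u).indicator 1 ω - ε) * ((M.revealed ε v).indicator 1 ω - ε) ∂M.P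
      ≤ if u = v then 1 else 0 := by
  have := M.probP
  have hu := M.measurableSet_revealed ε u
  have hv := M.measurableSet_revealed ε v
  have e : ∀ ω, ((M.revealed ε u).indicator 1 ω - ε) * ((M.revealed ε v).indicator 1 ω - ε)
      = (M.revealed ε u ∩ M.revealed ε v).indicator 1 ω - ε * (M.revealed ε u).indicator 1 ω
        - ε * (M.revealed ε v).indicator 1 ω + ε ^ 2 := by
    intro ω
    rw [Set.inter_indicator_one]
    simp only [Pi.mul_apply]
    ring
  have hi : ∀ {A : Set M.Ω}, MeasurableSet A → Integrable (A.indicator (1 : M.Ω → ℝ)) M.P :=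
    fun hA => (integrable_const (1 : ℝ)).indicator hA
  have i1 := hi (hu.inter hv)
  have i2 := (hi hu).const_mul ε
  have i3 := (hi hv).const_mul ε
  have i12 : Integrable (fun ω => (M.revealed ε u ∩ M.revealed ε v).indicator (1 : M.Ω → ℝ) ω
      - ε * (M.revealed ε u).indicator 1 ω) M.P := i1.sub i2
  have i123 : Integrable (fun ω => (M.revealed ε u ∩ M.revealed ε v).indicator (1 : M.Ω → ℝ) ω
      - ε * (M.revealed ε u).indicator 1 ω - ε * (M.revealed ε v).indicator 1 ω) M.P := i12.sub i3
  simp_rw [e]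
  rw [integral_add i123 (integrable_const _), integral_sub i12 i3, integral_sub i1 i2,
    integral_const_mul, integral_const_mul, integral_indicator_one (hu.inter hv),
    integral_indicator_one hu, integral_indicator_one hv, M.measureReal_revealed hε,
    M.measureReal_revealed hε, integral_const, probReal_univ, one_smul]
  split_ifs with h
  · subst h
    rw [Set.inter_self, M.measureReal_revealed hε]
    nlinarith [hε.1, hε.2]
  · rw [M.measureReal_revealed_inter hε h]
    nlinarith

end

section

variable {X Y' V : Type*} [Fintype X] [Fintype Y'] [Fintype V] {Q : X → X → Y' → ℝ}
  {E : Set (V × V)}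

theorem measurableSet_cylinders (M : Model X Y' Q E) (ε : ℝ) (u : V) {s : Set M.Ω}
    (hs : s ∈ M.cylinders ε u) : MeasurableSet s := by
  obtain ⟨T, σ, y, -, rfl⟩ := hs
  simp only [Set.ofPred_and, Set.ofPred_forall]
  refine MeasurableSet.inter ?_ (MeasurableSet.inter ?_ ?_)
  · exact Finset.measurableSet_biInter T fun v _ => M.measurableSet_revealed ε v
  · exact MeasurableSet.iInter fun v => M.measθ v (t := {σ v}) trivial
  · exact MeasurableSet.iInter fun e => M.measY e (t := {y e}) trivial

theorem measurableSet_generateFrom_cylinders (M : Model X Y' Q E) (ε : ℝ) (u : V)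
    (R : (V → X) → (V × V → Y') → Prop) (T : Finset V) (hT : u ∉ T) :
    MeasurableSet[MeasurableSpace.generateFrom (M.cylinders ε u)]
      {ω | (∀ v ∈ T, M.U v ω ≤ ε) ∧ R (fun v => M.θ v ω) fun e => M.Yobs e ω} := by
  have : {ω | (∀ v ∈ T, M.U v ω ≤ ε) ∧ R (fun v => M.θ v ω) fun e => M.Yobs e ω}
      = ⋃ p ∈ {p : (V → X) × (V × V → Y') | R p.1 p.2},
        {ω | (∀ v ∈ T, M.U v ω ≤ ε) ∧ (∀ v, M.θ v ω = p.1 v) ∧ ∀ e, M.Yobs e ω = p.2 e} := by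
    ext ω
    simp only [Set.mem_ofPred_eq, Set.mem_iUnion, exists_prop, Prod.exists]
    constructor
    · rintro ⟨h1, h2⟩
      exact ⟨_, _, h2, h1, fun _ => rfl, fun _ => rfl⟩
    · rintro ⟨σ, y, h, h1, hσ, hy⟩
      obtain rfl : (fun v => M.θ v ω) = σ := funext hσ
      obtain rfl : (fun e => M.Yobs e ω) = y := funext hy
      exact ⟨h1, h⟩
  rw [this]
  exact MeasurableSet.biUnion (Set.to_countable _) fun p _ =>
    MeasurableSpace.measurableSet_generateFrom ⟨T, p.1, p.2, hT, rfl⟩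

theorem comap_theta_le_cylinders (M : Model X Y' Q E) (ε : ℝ) (u v : V) :
    MeasurableSpace.comap (M.θ v) ⊤ ≤ MeasurableSpace.generateFrom (M.cylinders ε u) := by
  rintro _ ⟨s, -, rfl⟩
  convert M.measurableSet_generateFrom_cylinders ε u (fun σ _ => σ v ∈ s) ∅ (by simp) using 1
  ext ω
  simp

theorem oracleAlg_le_cylinders (M : Model X Y' Q E) (ε : ℝ) (u : V) :
    M.oracleAlg ε u ≤ MeasurableSpace.generateFrom (M.cylinders ε u) := by
  refine sup_le (sup_le (iSup₂_le fun e _ => ?_) (iSup₂_le fun w hw => ?_))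
    (M.comap_theta_le_cylinders ε u u)
  · rintro _ ⟨s, -, rfl⟩
    convert M.measurableSet_generateFrom_cylinders ε u (fun _ y => y e ∈ s) ∅ (by simp) using 1
    ext ω
    simp
  · refine M.comap_xi_le ε w _ ?_ (M.comap_theta_le_cylinders ε u w)
    convert M.measurableSet_generateFrom_cylinders ε u (fun _ _ => True) {w}
      (by simpa using! Ne.symm hw) using 1
    ext ω
    simp [revealed]

theorem indep_cylinders_revealed (M : Model X Y' Q E) {ε : ℝ} (hε : ε ∈ Set.Icc (0 : ℝ) 1)
    (u : V) : Indep (MeasurableSpace.generateFrom (M.cylinders ε u))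
      (MeasurableSpace.generateFrom {M.revealed ε u}) M.P := by
  have := M.probP
  refine IndepSets.indep
    (MeasurableSpace.generateFrom_le fun s hs => M.measurableSet_cylinders ε u hs)
    (MeasurableSpace.generateFrom_le (by rintro _ rfl; exact M.measurableSet_revealed ε u))
    (M.isPiSystem_cylinders ε u) (IsPiSystem.singleton _) rfl rfl ?_
  rw [IndepSets_iff]
  rintro _ _ ⟨T, σ, y, hT, rfl⟩ rfl
  have h1 := M.lawU T (fun _ => ε) (fun _ => hε) Finset.univ Finset.univ σ y
  have h2 := M.lawU (insert u T) (fun _ => ε) (fun _ => hε) Finset.univ Finset.univ σ y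
  rw [Finset.prod_insert hT, mul_assoc, ← h1] at h2
  simp only [Finset.mem_univ, forall_true_left, Finset.forall_mem_insert] at h2
  rw [← ENNReal.toReal_eq_toReal_iff' (by finiteness) (by finiteness), ENNReal.toReal_mul,
    ← measureReal_def M.P (M.revealed ε u), M.measureReal_revealed hε u, mul_comm, ← h2]
  congr 2
  ext ω
  simp only [revealed, Set.mem_inter_iff, Set.mem_ofPred_eq]
  tauto

theorem integral_sq_sum_centered_le (M : Model X Y' Q E) {ε : ℝ} (hε : ε ∈ Set.Icc (0 : ℝ) 1) :
    ∫ ω, (∑ u, ((M.revealed ε u).indicator 1 ω - ε)) ^ 2 ∂M.P ≤ Fintype.card V := by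
  have := M.probP
  have hW : ∀ u, MemLp (fun ω => (M.revealed ε u).indicator (1 : M.Ω → ℝ) ω - ε) ⊤ M.P :=
    fun u => ((memLp_const (1 : ℝ)).indicator (M.measurableSet_revealed ε u)).sub (memLp_const ε)
  have hi : ∀ u v, Integrable (fun ω => ((M.revealed ε u).indicator (1 : M.Ω → ℝ) ω - ε)
      * ((M.revealed ε v).indicator (1 : M.Ω → ℝ) ω - ε)) M.P :=
    fun u v => ((hW u).mul_top (hW v)).integrable le_top
  simp_rw [pow_two, Finset.sum_mul_sum]
  rw [integral_finsetSum _ fun u _ => integrable_finsetSum _ fun v _ => hi u v]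
  calc _ ≤ ∑ u : V, ∑ v : V, if u = v then (1 : ℝ) else 0 := by
        refine Finset.sum_le_sum fun u _ => ?_
        rw [integral_finsetSum _ fun v _ => hi u v]
        exact Finset.sum_le_sum fun v _ => M.integral_centered_mul_le hε u v
    _ = _ := by simp

theorem integral_sq_condCov_label_le (M : Model X Y' Q E) {ε : ℝ} (hε : ε ∈ Set.Ioc (0 : ℝ) 1)
    {f : X → ℝ} {R : ℝ} (hR : ∀ x, |f x| ≤ R) (u v : V) :
    ∫ ω, ((M.P[fun ω' => f (M.θ u ω') * f (M.θ v ω') | M.obsAlg ε Set.univ]) ω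
        - (M.P[fun ω' => f (M.θ u ω') | M.obsAlg ε Set.univ]) ω
          * (M.P[fun ω' => f (M.θ v ω') | M.obsAlg ε Set.univ]) ω) ^ 2 ∂M.P
      ≤ R ^ 2 / ε * ∫ ω, ((M.P[fun ω' => f (M.θ v ω') | M.obsAlg ε Set.univ]) ω) ^ 2
          * ((M.revealed ε u).indicator 1 ω - ε) ∂M.P := by
  have := M.probP
  have hε' : ε ∈ Set.Icc (0 : ℝ) 1 := ⟨hε.1.le, hε.2⟩
  have hcyl : MeasurableSpace.generateFrom (M.cylinders ε u) ≤ M.mΩ :=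
    MeasurableSpace.generateFrom_le fun s hs => M.measurableSet_cylinders ε u hs
  have hA := M.measurableSet_revealed ε u
  have hgA : MeasurableSpace.generateFrom {M.revealed ε u} ≤ M.mΩ :=
    MeasurableSpace.generateFrom_le (by rintro _ rfl; exact hA)
  have hsm : ∀ (m : MeasurableSpace M.Ω) (w : V), MeasurableSpace.comap (M.θ w) ⊤ ≤ m →
      StronglyMeasurable[m] fun ω => f (M.θ w ω) := fun m w hw => by
    let _ : MeasurableSpace X := ⊤
    exact ((measurable_from_top (f := f)).comp
      (measurable_iff_comap_le.2 hw)).stronglyMeasurable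
  have key := integral_sq_condExp_mul_indicator (M.obsAlg_le ε) (M.oracleAlg_le_cylinders ε u)
    hcyl hA (M.indep_cylinders_revealed hε' u) (M.measurableSet_obsAlg_revealed ε u)
    (M.obsAlg_le_oracleAlg_sup ε u) (M.oracleAlg_sup_le_traceAlg ε u)
    (hsm _ v (M.comap_theta_le_cylinders ε u v)) (M.memLp_comp_theta f v)
  rw [M.measureReal_revealed hε'] at key
  rw [key, ← mul_assoc, div_mul_cancel₀ _ hε.1.ne']
  exact integral_sq_condCov_le (M.obsAlg_le_oracleAlg_sup ε u)
    (sup_le ((M.oracleAlg_le_cylinders ε u).trans hcyl) hgA)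
    (hsm _ u (le_sup_of_le_left le_sup_right)) (M.memLp_comp_theta f u) (M.memLp_comp_theta f v)
    fun ω => sq_le_sq' (neg_le_of_abs_le (hR _)) (le_of_abs_le (hR _))

theorem sum_integral_sq_condCov_le (M : Model X Y' Q E) {ε : ℝ} (hε : ε ∈ Set.Ioc (0 : ℝ) 1)
    {f : X → ℝ} {R : ℝ} (hR : ∀ x, |f x| ≤ R) [Nonempty V] :
    ∑ u, ∑ v, ∫ ω, ((M.P[fun ω' => f (M.θ u ω') * f (M.θ v ω') | M.obsAlg ε Set.univ]) ω
        - (M.P[fun ω' => f (M.θ u ω') | M.obsAlg ε Set.univ]) ω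
          * (M.P[fun ω' => f (M.θ v ω') | M.obsAlg ε Set.univ]) ω) ^ 2 ∂M.P
      ≤ R ^ 4 / ε * (Fintype.card V * √(Fintype.card V)) := by
  have := M.probP
  have hε' : ε ∈ Set.Icc (0 : ℝ) 1 := ⟨hε.1.le, hε.2⟩
  set N : ℝ := (Fintype.card V : ℝ) with hN
  have hNpos : 0 < N := by rw [hN]; exact_mod_cast Fintype.card_pos
  set g : V → M.Ω → ℝ := fun v => M.P[fun ω' => f (M.θ v ω') | M.obsAlg ε Set.univ]
  set W : V → M.Ω → ℝ := fun u ω => (M.revealed ε u).indicator 1 ω - ε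
  have hgL : ∀ v, MemLp (g v) ⊤ M.P := fun v => (M.memLp_comp_theta f v).condExp le_top
  have hW : ∀ u, MemLp (W u) ⊤ M.P :=
    fun u => ((memLp_const (1 : ℝ)).indicator (M.measurableSet_revealed ε u)).sub (memLp_const ε)
  have hgW : ∀ u v, Integrable (fun ω => g v ω ^ 2 * W u ω) M.P := fun u v => by
    simpa [pow_two] using! (((hgL v).mul_top (hgL v)).mul_top (hW u)).integrable le_top
  have hWW : Integrable (fun ω => (∑ u, W u ω) ^ 2) M.P := by
    have h := memLp_finsetSum Finset.univ fun u _ => hW u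
    simpa [pow_two] using! (h.mul_top h).integrable le_top
  have hbd : ∀ᵐ ω ∂M.P, ∀ v, |g v ω| ≤ R := by
    rw [ae_all_iff]
    intro v
    exact ae_bdd_abs_condExp_of_ae_bdd_abs (.of_forall fun ω => hR _)
  have hs : 0 < √N := Real.sqrt_pos.2 hNpos
  have hss : √N * √N = N := Real.mul_self_sqrt hNpos.le
  calc _ ≤ ∑ u, ∑ v, R ^ 2 / ε * ∫ ω, g v ω ^ 2 * W u ω ∂M.P :=
        Finset.sum_le_sum fun u _ => Finset.sum_le_sum fun v _ =>
          M.integral_sq_condCov_label_le hε hR u v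
    _ = R ^ 2 / ε * ∫ ω, (∑ v, g v ω ^ 2) * ∑ u, W u ω ∂M.P := by
        simp_rw [← Finset.mul_sum]
        congr 1
        simp_rw [Finset.mul_sum, Finset.sum_mul]
        rw [integral_finsetSum _ fun u _ => integrable_finsetSum _ fun v _ => hgW u v]
        exact Finset.sum_congr rfl fun u _ => (integral_finsetSum _ fun v _ => hgW u v).symm
    _ ≤ R ^ 2 / ε * ∫ ω, N * R ^ 2 * ((√N + (∑ u, W u ω) ^ 2 / √N) / 2) ∂M.P := by
        refine mul_le_mul_of_nonneg_left ?_ (by have := hε.1; positivity)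
        refine integral_mono_ae ?_ ?_ ?_
        · simp_rw [Finset.mul_sum, Finset.sum_mul]
          exact integrable_finsetSum _ fun u _ => integrable_finsetSum _ fun v _ => hgW u v
        · exact (((integrable_const _).add (hWW.div_const _)).div_const _).const_mul _
        · filter_upwards [hbd] with ω hω
          have hZ : ∑ v, g v ω ^ 2 ≤ N * R ^ 2 := by
            have := Finset.sum_le_card_nsmul Finset.univ (fun v => g v ω ^ 2) (R ^ 2)
              fun v _ => sq_le_sq' (neg_le_of_abs_le (hω v)) (le_of_abs_le (hω v))
            simpa using! this
          have hWs : |∑ u, W u ω| ≤ (√N + (∑ u, W u ω) ^ 2 / √N) / 2 := by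
            rw [le_div_iff₀ two_pos, ← sub_nonneg, ← sq_abs]
            have : √N + |∑ u, W u ω| ^ 2 / √N - |∑ u, W u ω| * 2
                = (√N - |∑ u, W u ω|) ^ 2 / √N := by field_simp; ring
            rw [this]
            positivity
          calc (∑ v, g v ω ^ 2) * ∑ u, W u ω ≤ (∑ v, g v ω ^ 2) * |∑ u, W u ω| :=
                mul_le_mul_of_nonneg_left (le_abs_self _)
                  (Finset.sum_nonneg fun v _ => sq_nonneg _)
            _ ≤ _ := mul_le_mul hZ hWs (abs_nonneg _) (by positivity)
    _ = R ^ 2 / ε * (N * R ^ 2 * ((√N + (∫ ω, (∑ u, W u ω) ^ 2 ∂M.P) / √N) / 2)) := by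
        rw [integral_const_mul, integral_div, integral_add (integrable_const _) (hWW.div_const _),
          integral_div, integral_const, probReal_univ, one_smul]
    _ ≤ R ^ 2 / ε * (N * R ^ 2 * ((√N + N / √N) / 2)) := by
        have := hε.1
        have := M.integral_sq_sum_centered_le hε'
        gcongr
    _ = _ := by
        rw [Real.div_sqrt]
        ring

end

end Model

theorem riskOf_sub_riskOf_eq {X Y' : Type*} [Fintype X] [Fintype Y'] {n : ℕ}
    {Q : X → X → Y' → ℝ} {E : Set (Fin n × Fin n)} (M : Model X Y' Q E) (f : X → ℝ) (ε : ℝ) :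
    riskOf M f (fun ω u v =>
          (M.P[(fun ω' => f (M.θ u ω')) | M.obsAlg ε Set.univ]) ω *
            (M.P[(fun ω' => f (M.θ v ω')) | M.obsAlg ε Set.univ]) ω)
        - riskOf M f (fun ω u v =>
          (M.P[(fun ω' => f (M.θ u ω') * f (M.θ v ω')) | M.obsAlg ε Set.univ]) ω)
      = ((n : ℝ) ^ 2)⁻¹ * ∑ u, ∑ v,
        ∫ ω, ((M.P[fun ω' => f (M.θ u ω') * f (M.θ v ω') | M.obsAlg ε Set.univ]) ω
          - (M.P[fun ω' => f (M.θ u ω') | M.obsAlg ε Set.univ]) ω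
            * (M.P[fun ω' => f (M.θ v ω') | M.obsAlg ε Set.univ]) ω) ^ 2 ∂M.P := by
  have := M.probP
  have hsum : ∀ k : Fin n → Fin n → M.Ω → ℝ, (∀ u v, MemLp (k u v) ⊤ M.P) →
      ∫ ω, (∑ u, ∑ v, (f (M.θ u ω) * f (M.θ v ω) - k u v ω) ^ 2) ∂M.P
        = ∑ u, ∑ v, ∫ ω, (f (M.θ u ω) * f (M.θ v ω) - k u v ω) ^ 2 ∂M.P := by
    intro k hk
    have hi : ∀ u v, Integrable (fun ω => (f (M.θ u ω) * f (M.θ v ω) - k u v ω) ^ 2) M.P := by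
      intro u v
      have h := ((M.memLp_comp_theta f u).mul_top (M.memLp_comp_theta f v)).sub (hk u v)
      simpa [pow_two] using! (h.mul_top h).integrable le_top
    rw [integral_finsetSum _ fun u _ => integrable_finsetSum _ fun v _ => hi u v]
    exact Finset.sum_congr rfl fun u _ => integral_finsetSum _ fun v _ => hi u v
  have hp : ∀ u v, MemLp (fun ω => f (M.θ u ω) * f (M.θ v ω)) ⊤ M.P := fun u v =>
    (M.memLp_comp_theta f u).mul_top (M.memLp_comp_theta f v)
  have hk : ∀ u v, MemLp (fun ω => (M.P[fun ω' => f (M.θ u ω') | M.obsAlg ε Set.univ]) ω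
      * (M.P[fun ω' => f (M.θ v ω') | M.obsAlg ε Set.univ]) ω) ⊤ M.P := fun u v =>
    ((M.memLp_comp_theta f u).condExp le_top).mul_top ((M.memLp_comp_theta f v).condExp le_top)
  unfold riskOf
  rw [hsum _ hk, hsum _ fun u v => (hp u v).condExp le_top, ← mul_sub, ← Finset.sum_sub_distrib]
  congr 1
  refine Finset.sum_congr rfl fun u _ => ?_
  rw [← Finset.sum_sub_distrib]
  exact Finset.sum_congr rfl fun v _ => integral_sq_sub_condExp (M.obsAlg_le ε) (hp u v) (hk u v)
    (stronglyMeasurable_condExp.mul stronglyMeasurable_condExp).aestronglyMeasurable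

/-- Proposition: decoupling. On any sequence of finite graphs, the
decoupled estimator asymptotically achieves the Bayes risk for almost every ε. -/
theorem statement_4
    {X Y' : Type*} [Fintype X] [Fintype Y'] [Nonempty X]
    (hcard : 2 ≤ Fintype.card X)
    (Q : X → X → Y' → ℝ)
    (hQ0 : ∀ x1 x2 y, 0 ≤ Q x1 x2 y) (hQ1 : ∀ x1 x2, ∑ y, Q x1 x2 y = 1)
    (E : ∀ n : ℕ, Set (Fin n × Fin n))
    (hloop : ∀ n, ∀ e ∈ E n, e.1 ≠ e.2)
    (hori : ∀ n (u v : Fin n), (u, v) ∈ E n → (v, u) ∉ E n)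
    (M : ∀ n, Model X Y' Q (E n))
    (f : X → ℝ) :
    ∀ᵐ ε ∂(volume.restrict (Set.Ioo (0:ℝ) 1)),
      Tendsto (fun n : ℕ =>
          riskOf (M n) f (fun ω u v =>
              ((M n).P[(fun ω' => f ((M n).θ u ω')) | (M n).obsAlg ε Set.univ]) ω *
                ((M n).P[(fun ω' => f ((M n).θ v ω')) | (M n).obsAlg ε Set.univ]) ω)
          - riskOf (M n) f (fun ω u v =>
              ((M n).P[(fun ω' => f ((M n).θ u ω') * f ((M n).θ v ω'))
                | (M n).obsAlg ε Set.univ]) ω))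
        atTop (nhds 0) := by
  obtain ⟨R, hR⟩ := Finite.exists_le fun x => |f x|
  refine (ae_restrict_iff' measurableSet_Ioo).2 (.of_forall fun ε hε => ?_)
  have hlim : Tendsto (fun n : ℕ => R ^ 4 / ε * (√(n : ℝ))⁻¹) atTop (nhds 0) := by
    simpa using! ((Real.tendsto_sqrt_atTop.comp tendsto_natCast_atTop_atTop).inv_tendsto_atTop
      ).const_mul (R ^ 4 / ε)
  refine squeeze_zero' (.of_forall fun n => ?_) ?_ hlim
  · rw [riskOf_sub_riskOf_eq]
    exact mul_nonneg (by positivity) (Finset.sum_nonneg fun u _ => Finset.sum_nonneg fun v _ =>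
      integral_nonneg fun ω => sq_nonneg _)
  · filter_upwards [eventually_gt_atTop 0] with n hn
    have : NeZero n := ⟨hn.ne'⟩
    have hn' : (0 : ℝ) < n := by exact_mod_cast hn
    rw [riskOf_sub_riskOf_eq]
    calc _ ≤ ((n : ℝ) ^ 2)⁻¹ * (R ^ 4 / ε * (n * √n)) := by
          refine mul_le_mul_of_nonneg_left ?_ (by positivity)
          simpa using (M n).sum_integral_sq_condCov_le ⟨hε.1, hε.2.le⟩ hR
      _ = R ^ 4 / ε * (√(n : ℝ) / n) := by field_simp
      _ = _ := by rw [Real.sqrt_div_self]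

end
end

section
/- There exists a constant c₀ = c₀(|X|,|Y|) > 0 such that for all n with nk even: P( θ₀ ∈ Θ(η_n; G_n, Y) ) ≥ 1 − c₀⁻¹ exp(−c₀ (log n)²), where G_n is a uniformly random simple k-regular graph on n vertices and (θ₀, Y) are generated by the observation model on G_n. -/
open MeasureTheory ProbabilityTheory Filter
open scoped ENNReal Classical

noncomputable section

/-- `g` is the adjacency function of a simple `k`-regular graph on `Fin n`. -/
def IsRegAdj (n k : ℕ) (g : Fin n → Fin n → Bool) : Prop :=
  (∀ u v, g u v = g v u) ∧ (∀ u, g u u = false) ∧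
    ∀ u, (Finset.univ.filter fun v => g u v = true).card = k

/-- The edges of such a graph, each with its canonical orientation. -/
def edgesOf {n : ℕ} (g : Fin n → Fin n → Bool) : Finset (Fin n × Fin n) :=
  Finset.univ.filter fun e => e.1 < e.2 ∧ g e.1 e.2 = true

/-- A probability space carrying a random graph on `n` vertices, labels, edge
observations and auxiliary uniform random variables for the side information. -/
structure RegSpace (X Y' : Type*) (n : ℕ) where
  Ω : Type
  mΩ : MeasurableSpace Ω
  P : @Measure Ω mΩ
  θ0 : Ω → Fin n → X
  G : Ω → Fin n → Fin n → Bool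
  Yobs : Fin n × Fin n → Ω → Y'
  U : Ω → Fin n → ℝ

attribute [instance] RegSpace.mΩ

/-- `M` carries the observation model with kernel `Q` on a uniformly random simple
`k`-regular graph on `n` (labelled) vertices: the graph is uniform among `k`-regular
graphs, the labels are i.i.d. uniform and independent of the graph, and conditionally
on graph and labels the edge observations are independent with law `Q(·|θ_u,θ_v)`. -/
def RegSpace.IsRegModel {X Y' : Type*} [Fintype X] [Fintype Y'] (Q : X → X → Y' → ℝ)
    (k : ℕ) {n : ℕ} (M : RegSpace X Y' n) : Prop :=
  IsProbabilityMeasure M.P ∧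
  (∀ v, @Measurable _ _ M.mΩ ⊤ (fun ω => M.θ0 ω v)) ∧
  (@Measurable _ _ M.mΩ ⊤ M.G) ∧
  (∀ e, @Measurable _ _ M.mΩ ⊤ (M.Yobs e)) ∧
  (∀ v, @Measurable _ _ M.mΩ inferInstance (fun ω => M.U ω v)) ∧
  (M.P {ω | IsRegAdj n k (M.G ω)} = 1) ∧
  (∀ g : Fin n → Fin n → Bool, IsRegAdj n k g →
    ∀ (σ : Fin n → X) (F : Finset (Fin n × Fin n)), (∀ e ∈ F, e ∈ edgesOf g) →
    ∀ y : Fin n × Fin n → Y',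
      (M.P {ω | M.G ω = g ∧ M.θ0 ω = σ ∧ ∀ e ∈ F, M.Yobs e ω = y e}).toReal
        = (Nat.card {g' : Fin n → Fin n → Bool // IsRegAdj n k g'} : ℝ)⁻¹ *
          ((Fintype.card X : ℝ)⁻¹) ^ n * ∏ e ∈ F, Q (σ e.1) (σ e.2) (y e))

/-- The auxiliary variables `U` are i.i.d. uniform on [0,1] and independent of
everything else. -/
def RegSpace.HasUniformSide {X Y' : Type*} {n : ℕ} (M : RegSpace X Y' n) : Prop :=
  ∀ (T : Finset (Fin n)) (a : Fin n → ℝ), (∀ v, a v ∈ Set.Icc (0:ℝ) 1) →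
    ∀ A : Set ((Fin n → X) × (Fin n → Fin n → Bool) × (Fin n × Fin n → Y')),
      (M.P {ω | (∀ v ∈ T, M.U ω v ≤ a v) ∧
          (M.θ0 ω, M.G ω, fun e => M.Yobs e ω) ∈ A}).toReal
        = (∏ v ∈ T, a v) *
          (M.P {ω | (M.θ0 ω, M.G ω, fun e => M.Yobs e ω) ∈ A}).toReal

variable {X Y' : Type*}

/-- Edge empirical distribution of a configuration and observations. -/
def empEdge [Fintype X] [Fintype Y'] {n : ℕ} (g : Fin n → Fin n → Bool) (θ : Fin n → X)
    (y : Fin n × Fin n → Y') (x1 x2 : X) (b : Y') : ℝ :=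
  ((edgesOf g).card : ℝ)⁻¹ *
    (((edgesOf g).filter fun e => θ e.1 = x1 ∧ θ e.2 = x2 ∧ y e = b).card : ℝ)

/-- The reference edge distribution ν̄_e(x₁,x₂,y) = ν̄(x₁)ν̄(x₂)Q(y|x₁,x₂). -/
def nuBarE [Fintype X] (Q : X → X → Y' → ℝ) (x1 x2 : X) (b : Y') : ℝ :=
  (Fintype.card X : ℝ)⁻¹ * (Fintype.card X : ℝ)⁻¹ * Q x1 x2 b

/-- Total variation distance between the edge empirical distribution and ν̄_e. -/
def dTVedge [Fintype X] [Fintype Y'] {n : ℕ} (Q : X → X → Y' → ℝ)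
    (g : Fin n → Fin n → Bool) (θ : Fin n → X) (y : Fin n × Fin n → Y') : ℝ :=
  (2:ℝ)⁻¹ * ∑ x1, ∑ x2, ∑ b, |empEdge g θ y x1 x2 b - nuBarE Q x1 x2 b|

/-- η_n = (log n)/√n. -/
def ηseq (n : ℕ) : ℝ := Real.log n / Real.sqrt n

/-- The typical set Θ(η;G,Y). -/
def typicalSet [Fintype X] [Fintype Y'] {n : ℕ} (Q : X → X → Y' → ℝ) (η : ℝ)
    (g : Fin n → Fin n → Bool) (y : Fin n × Fin n → Y') : Set (Fin n → X) :=
  {θ | dTVedge Q g θ y ≤ η}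

/-- Joint vertex empirical distribution of two configurations. -/
def empVert [Fintype X] {n : ℕ} (a b : Fin n → X) (x1 x2 : X) : ℝ :=
  (n : ℝ)⁻¹ * ((Finset.univ.filter fun u => a u = x1 ∧ b u = x2).card : ℝ)

/-- Total variation distance between the joint vertex empirical distribution and
ν̄ × ν̄. -/
def dTVvert [Fintype X] {n : ℕ} (a b : Fin n → X) : ℝ :=
  (2:ℝ)⁻¹ * ∑ x1, ∑ x2,
    |empVert a b x1 x2 - (Fintype.card X : ℝ)⁻¹ * (Fintype.card X : ℝ)⁻¹|

/-- The σ-algebra generated by the graph and the edge observations. -/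
def RegSpace.obsAlg {n : ℕ} (M : RegSpace X Y' n) : MeasurableSpace M.Ω :=
  MeasurableSpace.comap
    (fun ω => (M.G ω,
      fun e => if e ∈ edgesOf (M.G ω) then some (M.Yobs e ω) else none)) ⊤

/-- An admissible estimator: a function of (G,Y) outputting a typical configuration
whenever one exists. -/
def IsTypEstimator [Fintype X] [Fintype Y'] (Q : X → X → Y' → ℝ) {n : ℕ}
    (M : RegSpace X Y' n) (θhat : M.Ω → Fin n → X) : Prop :=
  (@Measurable _ _ M.obsAlg ⊤ θhat) ∧
  ∀ ω, (typicalSet Q (ηseq n) (M.G ω) (fun e => M.Yobs e ω)).Nonempty →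
    θhat ω ∈ typicalSet Q (ηseq n) (M.G ω) (fun e => M.Yobs e ω)

/-- Hoeffding's lemma for a centred variable with `|Z| ≤ c` on a finite weighted space. -/
lemma sum_mul_exp_le_of_centered {ι : Type*} (S : Finset ι) (w Z : ι → ℝ) (c s : ℝ)
    (hw : ∀ i ∈ S, 0 ≤ w i) (hw1 : ∑ i ∈ S, w i = 1) (hZ : ∑ i ∈ S, w i * Z i = 0)
    (hc : ∀ i ∈ S, |Z i| ≤ c) :
    ∑ i ∈ S, w i * Real.exp (s * Z i) ≤ Real.exp (s ^ 2 * c ^ 2 / 2) := by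
  have hne : S.Nonempty := by
    rw [Finset.nonempty_iff_ne_empty]
    rintro rfl
    simp at hw1
  have hc0 : 0 ≤ c := (abs_nonneg _).trans (hc _ hne.choose_spec)
  rcases hc0.eq_or_lt with rfl | hcpos
  · have h0 : ∀ i ∈ S, Z i = 0 := fun i hi => abs_nonpos_iff.mp (hc i hi)
    rw [Finset.sum_congr rfl fun i hi => by rw [h0 i hi]]
    simp [hw1]
  have key : ∀ i ∈ S, w i * Real.exp (s * Z i) ≤
      w i * Real.cosh (s * c) + w i * Z i * (Real.sinh (s * c) / c) := by
    intro i hi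
    obtain ⟨h1, h2⟩ := abs_le.mp (hc i hi)
    have ha : 0 ≤ (c + Z i) / (2 * c) := div_nonneg (by linarith) (by linarith)
    have hb : 0 ≤ (c - Z i) / (2 * c) := div_nonneg (by linarith) (by linarith)
    have hconv := convexOn_exp.2 (Set.mem_univ (s * c)) (Set.mem_univ (-(s * c))) ha hb
      (by field_simp; ring)
    simp only [smul_eq_mul] at hconv
    have e1 : (c + Z i) / (2 * c) * (s * c) + (c - Z i) / (2 * c) * -(s * c) = s * Z i := by
      field_simp; ring
    rw [e1] at hconv
    calc w i * Real.exp (s * Z i) ≤ w i * _ := mul_le_mul_of_nonneg_left hconv (hw i hi)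
      _ = _ := by rw [Real.cosh_eq, Real.sinh_eq]; field_simp; ring
  calc _ ≤ ∑ i ∈ S, (w i * Real.cosh (s * c) + w i * Z i * (Real.sinh (s * c) / c)) :=
        Finset.sum_le_sum key
    _ = Real.cosh (s * c) := by
        rw [Finset.sum_add_distrib, ← Finset.sum_mul, ← Finset.sum_mul, hw1, hZ]; ring
    _ ≤ _ := by
        refine (Real.cosh_le_exp_half_sq _).trans_eq ?_
        congr 1; ring

/-- McDiarmid's exponential moment bound for i.i.d. uniform coordinates on a finite set. -/
lemma mean_exp_le_of_bounded_differences [Fintype X] [Nonempty X] (c s : ℝ) (n : ℕ)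
    (f : (Fin n → X) → ℝ) (hf : ∀ θ v x, |f (Function.update θ v x) - f θ| ≤ c) :
    ((Fintype.card X : ℝ)⁻¹) ^ n * ∑ θ, Real.exp (s * (f θ -
      ((Fintype.card X : ℝ)⁻¹) ^ n * ∑ θ', f θ')) ≤ Real.exp (n * (s ^ 2 * c ^ 2 / 2)) := by
  set r : ℝ := (Fintype.card X : ℝ)⁻¹ with hr
  have hcard : (Fintype.card X : ℝ) ≠ 0 := by exact_mod_cast Fintype.card_ne_zero
  have hr0 : 0 ≤ r := by positivity
  have hsum : ∑ _x : X, r = 1 := by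
    simp [hr, hcard]
  induction n with
  | zero => simp
  | succ n ih =>
    set h : (Fin n → X) → ℝ := fun τ => ∑ x, r * f (Fin.cons x τ) with hh
    have hsplit : ∀ F : (Fin (n + 1) → X) → ℝ,
        ∑ θ, F θ = ∑ τ, ∑ x, F (Fin.cons x τ) := by
      intro F
      rw [← (Fin.consEquiv fun _ => X).sum_comp, Fintype.sum_prod_type, Finset.sum_comm]
      rfl
    have hmean : r ^ (n + 1) * ∑ θ, f θ = r ^ n * ∑ τ, h τ := by
      simp only [hsplit, hh, ← Finset.mul_sum]
      ring
    have hdiff : ∀ τ v x, |h (Function.update τ v x) - h τ| ≤ c := by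
      intro τ v x
      simp only [hh]
      rw [← Finset.sum_sub_distrib]
      calc _ ≤ ∑ y : X, |r * f (Fin.cons y (Function.update τ v x)) - r * f (Fin.cons y τ)| :=
            Finset.abs_sum_le_sum_abs _ _
        _ ≤ ∑ _y : X, r * c := by
            refine Finset.sum_le_sum fun y _ => ?_
            rw [← mul_sub, abs_mul, abs_of_nonneg hr0, Fin.cons_update]
            exact mul_le_mul_of_nonneg_left (hf _ _ _) hr0
        _ = c := by rw [← Finset.sum_mul, hsum, one_mul]
    have hinner : ∀ τ, ∑ x, r * Real.exp (s * (f (Fin.cons x τ) - h τ)) ≤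
        Real.exp (s ^ 2 * c ^ 2 / 2) := by
      intro τ
      refine sum_mul_exp_le_of_centered Finset.univ (fun _ => r) _ c s (fun _ _ => hr0) hsum ?_ ?_
      · simp only [mul_sub, Finset.sum_sub_distrib, ← Finset.sum_mul, hsum, hh, one_mul, sub_self]
      · intro x _
        have e : f (Fin.cons x τ) - h τ =
            ∑ y, r * (f (Fin.cons x τ) - f (Fin.cons y τ)) := by
          simp only [mul_sub, Finset.sum_sub_distrib, ← Finset.sum_mul, hsum, hh, one_mul]
        rw [e]
        calc _ ≤ ∑ y, |r * (f (Fin.cons x τ) - f (Fin.cons y τ))| :=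
              Finset.abs_sum_le_sum_abs _ _
          _ ≤ ∑ _y : X, r * c := by
              refine Finset.sum_le_sum fun y _ => ?_
              rw [abs_mul, abs_of_nonneg hr0]
              refine mul_le_mul_of_nonneg_left ?_ hr0
              have := hf (Fin.cons y τ) 0 x
              rwa [Fin.update_cons_zero] at this
          _ = c := by rw [← Finset.sum_mul, hsum, one_mul]
    rw [hmean, hsplit]
    calc _ = r ^ n * ∑ τ, Real.exp (s * (h τ - r ^ n * ∑ τ', h τ')) *
            ∑ x, r * Real.exp (s * (f (Fin.cons x τ) - h τ)) := by
          rw [pow_succ, mul_assoc, Finset.mul_sum (a := r)]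
          congr 1
          refine Finset.sum_congr rfl fun τ _ => ?_
          rw [Finset.mul_sum (a := r), Finset.mul_sum (a := Real.exp _)]
          refine Finset.sum_congr rfl fun x _ => ?_
          rw [mul_left_comm, ← Real.exp_add]
          ring_nf
      _ ≤ r ^ n * ∑ τ, Real.exp (s * (h τ - r ^ n * ∑ τ', h τ')) *
            Real.exp (s ^ 2 * c ^ 2 / 2) := by
          gcongr with τ _
          exact hinner τ
      _ = (r ^ n * ∑ τ, Real.exp (s * (h τ - r ^ n * ∑ τ', h τ'))) *
            Real.exp (s ^ 2 * c ^ 2 / 2) := by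
          rw [← Finset.sum_mul, mul_assoc]
      _ ≤ Real.exp (n * (s ^ 2 * c ^ 2 / 2)) * Real.exp (s ^ 2 * c ^ 2 / 2) := by
          gcongr
          exact ih h hdiff
      _ = _ := by
          rw [← Real.exp_add]
          push_cast
          ring_nf

/-- Two-sided Chernoff bound on a finite weighted space. -/
lemma sum_filter_abs_gt_le {ι : Type*} [Fintype ι] (p Z : ι → ℝ) (hp : ∀ i, 0 ≤ p i)
    (A τ : ℝ) (hA : 0 < A) (hτ : 0 ≤ τ)
    (hmgf : ∀ s : ℝ, ∑ i, p i * Real.exp (s * Z i) ≤ Real.exp (s ^ 2 * A)) :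
    ∑ i with τ < |Z i|, p i ≤ 2 * Real.exp (-(τ ^ 2 / (4 * A))) := by
  set s : ℝ := τ / (2 * A) with hs
  have hs0 : 0 ≤ s := by positivity
  have hexp : Real.exp (-(s * τ)) * Real.exp (s ^ 2 * A) = Real.exp (-(τ ^ 2 / (4 * A))) := by
    rw [← Real.exp_add, hs]
    congr 1
    field_simp
    ring
  calc ∑ i with τ < |Z i|, p i
      ≤ ∑ i with τ < |Z i|, Real.exp (-(s * τ)) *
          (p i * Real.exp (s * Z i) + p i * Real.exp (-s * Z i)) := by
        refine Finset.sum_le_sum fun i hi => ?_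
        have hi : τ < |Z i| := by simpa using hi
        have h1 : Real.exp (s * τ) ≤ Real.exp (s * Z i) + Real.exp (-s * Z i) := by
          rcases lt_abs.mp hi with h | h
          · have : Real.exp (s * τ) ≤ Real.exp (s * Z i) := by gcongr
            linarith [Real.exp_pos (-s * Z i)]
          · have : Real.exp (s * τ) ≤ Real.exp (-s * Z i) := by
              rw [neg_mul, ← mul_neg]; gcongr
            linarith [Real.exp_pos (s * Z i)]
        calc p i = p i * (Real.exp (-(s * τ)) * Real.exp (s * τ)) := by
              rw [← Real.exp_add]; simp
          _ ≤ p i * (Real.exp (-(s * τ)) * (Real.exp (s * Z i) + Real.exp (-s * Z i))) := by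
              have := hp i
              gcongr
          _ = _ := by ring
    _ ≤ ∑ i, Real.exp (-(s * τ)) *
          (p i * Real.exp (s * Z i) + p i * Real.exp (-s * Z i)) := by
        refine Finset.sum_le_sum_of_subset_of_nonneg (Finset.filter_subset _ _) fun i _ _ => ?_
        have := hp i
        positivity
    _ = Real.exp (-(s * τ)) *
          (∑ i, p i * Real.exp (s * Z i) + ∑ i, p i * Real.exp (-s * Z i)) := by
        rw [← Finset.mul_sum, Finset.sum_add_distrib]
    _ ≤ Real.exp (-(s * τ)) * (Real.exp (s ^ 2 * A) + Real.exp (s ^ 2 * A)) := by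
        have h1 := hmgf s
        have h2 := hmgf (-s)
        rw [neg_sq] at h2
        gcongr
    _ = _ := by rw [← hexp]; ring

lemma sum_biUnion_le {α ι : Type*} [DecidableEq α] (S : Finset ι) (B : ι → Finset α) (w : α → ℝ)
    (hw : ∀ p, 0 ≤ w p) : ∑ p ∈ S.biUnion B, w p ≤ ∑ a ∈ S, ∑ p ∈ B a, w p := by
  induction S using Finset.induction_on with
  | empty => simp
  | insert a S ha ih =>
    rw [Finset.biUnion_insert, Finset.sum_insert ha]
    have h := Finset.sum_union_inter (s₁ := B a) (s₂ := S.biUnion B) (f := w)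
    have h' : 0 ≤ ∑ p ∈ B a ∩ S.biUnion B, w p := Finset.sum_nonneg fun p _ => hw p
    linarith

lemma mem_edgesOf {n : ℕ} {g : Fin n → Fin n → Bool} {e : Fin n × Fin n} :
    e ∈ edgesOf g ↔ e.1 < e.2 ∧ g e.1 e.2 = true := by
  simp [edgesOf]

lemma IsRegAdj.two_mul_card_edgesOf {n k : ℕ} {g : Fin n → Fin n → Bool}
    (hg : IsRegAdj n k g) : 2 * (edgesOf g).card = n * k := by
  obtain ⟨hsym, hirr, hdeg⟩ := hg
  have h1 : (Finset.univ.filter fun e : Fin n × Fin n => g e.1 e.2 = true).card = n * k := by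
    rw [Finset.card_filter, Fintype.sum_prod_type]
    simp only [← Finset.card_filter, hdeg]
    simp
  have h2 : (Finset.univ.filter fun e : Fin n × Fin n => g e.1 e.2 = true) =
      edgesOf g ∪ (edgesOf g).map (Equiv.prodComm _ _).toEmbedding := by
    ext ⟨u, v⟩
    simp only [Finset.mem_filter, Finset.mem_univ, true_and, Finset.mem_union, mem_edgesOf,
      Finset.mem_map_equiv, Equiv.prodComm_symm, Equiv.prodComm_apply, Prod.swap_prod_mk]
    rw [hsym v u]
    rcases lt_trichotomy u v with h | rfl | h
    · simp [h]
    · simp [hirr]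
    · simp [h]
  have h3 : Disjoint (edgesOf g) ((edgesOf g).map (Equiv.prodComm _ _).toEmbedding) := by
    rw [Finset.disjoint_left]
    rintro ⟨u, v⟩ h h'
    simp only [Finset.mem_map_equiv, Equiv.prodComm_symm, Equiv.prodComm_apply,
      Prod.swap_prod_mk, mem_edgesOf] at h h'
    exact lt_asymm h.1 h'.1
  rw [← h1, h2, Finset.card_union_of_disjoint h3, Finset.card_map, two_mul]

lemma IsRegAdj.card_incident_le {n k : ℕ} {g : Fin n → Fin n → Bool}
    (hg : IsRegAdj n k g) (v : Fin n) :
    ((edgesOf g).filter fun e => e.1 = v ∨ e.2 = v).card ≤ k := by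
  obtain ⟨hsym, hirr, hdeg⟩ := hg
  rw [← hdeg v]
  refine le_trans (Finset.card_le_card ?_) (Finset.card_image_le
    (f := fun w => if v < w then (v, w) else (w, v)))
  rintro ⟨a, b⟩ h
  simp only [Finset.mem_filter, mem_edgesOf] at h
  obtain ⟨⟨hab, hgab⟩, rfl | rfl⟩ := h
  · exact Finset.mem_image.mpr ⟨b, by simpa using hgab, by simp [hab]⟩
  · exact Finset.mem_image.mpr ⟨a, by simpa [hsym b a] using hgab, by simp [hab.not_gt]⟩

/-- Two distinct uniform i.i.d. labels are jointly uniform. -/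
lemma mean_indicator_pair [Fintype X] [Nonempty X] {n : ℕ} {u v : Fin n} (huv : u ≠ v)
    (x1 x2 : X) :
    ((Fintype.card X : ℝ)⁻¹) ^ n * ∑ θ : Fin n → X, (if θ u = x1 ∧ θ v = x2 then (1 : ℝ) else 0) =
      (Fintype.card X : ℝ)⁻¹ * (Fintype.card X : ℝ)⁻¹ := by
  have hcard : (Fintype.card X : ℝ) ≠ 0 := by exact_mod_cast Fintype.card_ne_zero
  set q := Fintype.card X with hq
  have hset : (Finset.univ.filter fun θ : Fin n → X => θ u = x1 ∧ θ v = x2) =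
      Fintype.piFinset fun i => if i = u then {x1} else if i = v then {x2} else Finset.univ := by
    ext θ
    simp only [Finset.mem_filter, Finset.mem_univ, true_and, Fintype.mem_piFinset]
    constructor
    · rintro ⟨h1, h2⟩ i
      split_ifs with hi hi'
      · simp [hi, h1]
      · simp [hi', h2]
      · simp
    · intro h
      refine ⟨by simpa using h u, by simpa [huv.symm] using h v⟩
  have hcount : q * q * (Finset.univ.filter fun θ : Fin n → X => θ u = x1 ∧ θ v = x2).card =
      q ^ n := by
    rw [hset, Fintype.card_piFinset]
    calc _ = (∏ i : Fin n, if i = u then q else 1) * (∏ i : Fin n, if i = v then q else 1) *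
          ∏ i, (if i = u then {x1} else if i = v then {x2} else Finset.univ : Finset X).card := by
          simp
      _ = ∏ _i : Fin n, q := by
          rw [← Finset.prod_mul_distrib, ← Finset.prod_mul_distrib]
          refine Finset.prod_congr rfl fun i _ => ?_
          by_cases hi : i = u
          · subst hi; simp [huv]
          · by_cases hi' : i = v <;> simp [hi, hi', hq, huv.symm]
      _ = q ^ n := by simp
  rw [Finset.sum_boole]
  have hcount' : (q : ℝ) * q * (Finset.univ.filter fun θ : Fin n → X =>
      θ u = x1 ∧ θ v = x2).card = (q : ℝ) ^ n := by exact_mod_cast hcount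
  rw [inv_pow, ← hcount']
  have : ((Finset.univ.filter fun θ : Fin n → X => θ u = x1 ∧ θ v = x2).card : ℝ) ≠ 0 := by
    intro h0
    rw [h0, mul_zero] at hcount'
    exact pow_ne_zero n hcard hcount'.symm
  field_simp

/-- Conditional probability, given the graph `g`, of the labels `p.1` and the edge
observations `p.2`. -/
def condWeight [Fintype X] (Q : X → X → Y' → ℝ) {n : ℕ} (g : Fin n → Fin n → Bool)
    (p : (Fin n → X) × (edgesOf g → Y')) : ℝ :=
  ((Fintype.card X : ℝ)⁻¹) ^ n * ∏ e : edgesOf g, Q (p.1 e.1.1) (p.1 e.1.2) (p.2 e)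

/-- Number of edges with labels `x1`, `x2` and observation `b`. -/
def edgeCount {n : ℕ} (g : Fin n → Fin n → Bool) (x1 x2 : X) (b : Y')
    (p : (Fin n → X) × (edgesOf g → Y')) : ℝ :=
  ∑ e : edgesOf g, if p.1 e.1.1 = x1 ∧ p.1 e.1.2 = x2 ∧ p.2 e = b then (1 : ℝ) else 0

lemma condWeight_nonneg [Fintype X] {Q : X → X → Y' → ℝ} (hQ : ∀ x1 x2 y, 0 ≤ Q x1 x2 y)
    {n : ℕ} (g : Fin n → Fin n → Bool) (p : (Fin n → X) × (edgesOf g → Y')) :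
    0 ≤ condWeight Q g p :=
  mul_nonneg (by positivity) (Finset.prod_nonneg fun _ _ => hQ _ _ _)

/-- Given the labels, the edge observations fluctuate sub-Gaussianly around their means. -/
lemma sum_obs_mul_exp_le [Fintype Y'] {Q : X → X → Y' → ℝ}
    (hQ : ∀ x1 x2 y, 0 ≤ Q x1 x2 y) (hQ1 : ∀ x1 x2, ∑ y, Q x1 x2 y = 1)
    {n : ℕ} (g : Fin n → Fin n → Bool) (x1 x2 : X) (b : Y') (s : ℝ) (θ : Fin n → X) :
    ∑ z : edgesOf g → Y', (∏ e : edgesOf g, Q (θ e.1.1) (θ e.1.2) (z e)) *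
      Real.exp (s * (edgeCount g x1 x2 b (θ, z) -
        ∑ e ∈ edgesOf g, if θ e.1 = x1 ∧ θ e.2 = x2 then Q x1 x2 b else 0)) ≤
      Real.exp ((edgesOf g).card * (s ^ 2 / 2)) := by
  set D : edgesOf g → Y' → ℝ := fun e y =>
    (if θ e.1.1 = x1 ∧ θ e.1.2 = x2 ∧ y = b then (1 : ℝ) else 0) -
      if θ e.1.1 = x1 ∧ θ e.1.2 = x2 then Q x1 x2 b else 0 with hD
  have hQle : Q x1 x2 b ≤ 1 := by
    rw [← hQ1 x1 x2]
    exact Finset.single_le_sum (fun y _ => hQ x1 x2 y) (Finset.mem_univ b)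
  have hfac : ∀ e : edgesOf g, ∑ y, Q (θ e.1.1) (θ e.1.2) y * Real.exp (s * D e y) ≤
      Real.exp (s ^ 2 / 2) := by
    intro e
    have := sum_mul_exp_le_of_centered Finset.univ (Q (θ e.1.1) (θ e.1.2)) (D e) 1 s
      (fun y _ => hQ _ _ y) (hQ1 _ _) ?_ ?_
    · simpa using this
    · simp only [hD]
      by_cases h : θ e.1.1 = x1 ∧ θ e.1.2 = x2
      · obtain ⟨h1, h2⟩ := h
        simp [h1, h2, mul_sub, Finset.sum_sub_distrib, ← Finset.sum_mul, hQ1]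
      · have h' : ∀ y, ¬ (θ e.1.1 = x1 ∧ θ e.1.2 = x2 ∧ y = b) := by tauto
        simp only [h, h', if_false]
        simp
    · intro y _
      have := hQ x1 x2 b
      simp only [hD]
      rw [abs_le]
      constructor <;> split_ifs <;> linarith
  calc _ = ∑ z : edgesOf g → Y', ∏ e : edgesOf g,
          (Q (θ e.1.1) (θ e.1.2) (z e) * Real.exp (s * D e (z e))) := by
        refine Finset.sum_congr rfl fun z _ => ?_
        rw [Finset.prod_mul_distrib, ← Real.exp_sum, ← Finset.mul_sum, edgeCount,
          ← Finset.sum_coe_sort (edgesOf g), ← Finset.sum_sub_distrib]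
    _ = ∏ e : edgesOf g, ∑ y, Q (θ e.1.1) (θ e.1.2) y * Real.exp (s * D e y) := by
        rw [Finset.prod_univ_sum, Fintype.piFinset_univ]
    _ ≤ ∏ _e : edgesOf g, Real.exp (s ^ 2 / 2) :=
        Finset.prod_le_prod (fun e _ => Finset.sum_nonneg fun y _ =>
          mul_nonneg (hQ _ _ _) (Real.exp_nonneg _)) fun e _ => hfac e
    _ = _ := by
        rw [Finset.prod_const, ← Real.exp_nat_mul]
        simp

/-- Conditional exponential moment bound for the centred edge counts. -/
lemma sum_condWeight_mul_exp_le [Fintype X] [Nonempty X] [Fintype Y'] {Q : X → X → Y' → ℝ}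
    (hQ : ∀ x1 x2 y, 0 ≤ Q x1 x2 y) (hQ1 : ∀ x1 x2, ∑ y, Q x1 x2 y = 1)
    {n k : ℕ} {g : Fin n → Fin n → Bool} (hg : IsRegAdj n k g)
    (x1 x2 : X) (b : Y') (s : ℝ) :
    ∑ p, condWeight Q g p * Real.exp (s * (edgeCount g x1 x2 b p -
      (edgesOf g).card * nuBarE Q x1 x2 b)) ≤ Real.exp (s ^ 2 * (n * (k : ℝ) ^ 2)) := by
  set r : ℝ := (Fintype.card X : ℝ)⁻¹ with hr
  set f : (Fin n → X) → ℝ := fun θ =>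
    ∑ e ∈ edgesOf g, if θ e.1 = x1 ∧ θ e.2 = x2 then Q x1 x2 b else 0 with hf
  have hQ0 := hQ x1 x2 b
  have hQle : Q x1 x2 b ≤ 1 := by
    rw [← hQ1 x1 x2]
    exact Finset.single_le_sum (fun y _ => hQ x1 x2 y) (Finset.mem_univ b)
  have hmean : r ^ n * ∑ θ, f θ = (edgesOf g).card * nuBarE Q x1 x2 b := by
    simp only [hf]
    rw [Finset.sum_comm, Finset.mul_sum, ← nsmul_eq_mul, ← Finset.sum_const]
    refine Finset.sum_congr rfl fun e he => ?_
    rw [nuBarE, ← mean_indicator_pair (mem_edgesOf.mp he).1.ne x1 x2, mul_assoc, Finset.sum_mul]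
    simp [hr]
  have hdiff : ∀ θ v x, |f (Function.update θ v x) - f θ| ≤ (k : ℝ) := by
    intro θ v x
    simp only [hf]
    rw [← Finset.sum_sub_distrib]
    calc _ ≤ ∑ e ∈ edgesOf g, _ := Finset.abs_sum_le_sum_abs _ _
      _ ≤ ∑ e ∈ edgesOf g, if e.1 = v ∨ e.2 = v then (1 : ℝ) else 0 := by
          refine Finset.sum_le_sum fun e _ => ?_
          by_cases h : e.1 = v ∨ e.2 = v
          · rw [if_pos h, abs_le]
            constructor <;> split_ifs <;> linarith
          · rw [if_neg h]
            push Not at h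
            rw [Function.update_of_ne h.1, Function.update_of_ne h.2]
            simp
      _ ≤ k := by
          rw [Finset.sum_boole]
          exact_mod_cast hg.card_incident_le v
  have hmc := mean_exp_le_of_bounded_differences (k : ℝ) s n f hdiff
  rw [hmean] at hmc
  have hm : ((edgesOf g).card : ℝ) ≤ n * (k : ℝ) ^ 2 := by
    have h1 : (edgesOf g).card ≤ n * k ^ 2 := by
      have := hg.two_mul_card_edgesOf
      have h2 : n * k ≤ n * k ^ 2 := Nat.mul_le_mul_left _ (Nat.le_self_pow two_ne_zero k)
      omega
    exact_mod_cast h1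
  rw [Fintype.sum_prod_type]
  calc _ = r ^ n * ∑ θ, Real.exp (s * (f θ - (edgesOf g).card * nuBarE Q x1 x2 b)) *
          ∑ z : edgesOf g → Y', (∏ e : edgesOf g, Q (θ e.1.1) (θ e.1.2) (z e)) *
            Real.exp (s * (edgeCount g x1 x2 b (θ, z) - f θ)) := by
        rw [Finset.mul_sum]
        refine Finset.sum_congr rfl fun θ _ => ?_
        rw [Finset.mul_sum, Finset.mul_sum]
        refine Finset.sum_congr rfl fun z _ => ?_
        rw [condWeight, mul_left_comm (Real.exp _), ← Real.exp_add, ← mul_add, ← mul_assoc,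
          add_comm, sub_add_sub_cancel]
    _ ≤ r ^ n * ∑ θ, Real.exp (s * (f θ - (edgesOf g).card * nuBarE Q x1 x2 b)) *
          Real.exp ((edgesOf g).card * (s ^ 2 / 2)) := by
        gcongr with θ _
        exact sum_obs_mul_exp_le hQ hQ1 g x1 x2 b s θ
    _ = (r ^ n * ∑ θ, Real.exp (s * (f θ - (edgesOf g).card * nuBarE Q x1 x2 b))) *
          Real.exp ((edgesOf g).card * (s ^ 2 / 2)) := by
        rw [← Finset.sum_mul, mul_assoc]
    _ ≤ Real.exp (n * (s ^ 2 * (k : ℝ) ^ 2 / 2)) * Real.exp ((edgesOf g).card * (s ^ 2 / 2)) := by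
        gcongr
    _ ≤ _ := by
        rw [← Real.exp_add]
        apply Real.exp_le_exp.mpr
        nlinarith [mul_le_mul_of_nonneg_right hm (sq_nonneg s)]

/-- Extension of observations on the edges of `g` to all pairs. -/
def extendObs [Nonempty Y'] {n : ℕ} {g : Fin n → Fin n → Bool} (z : edgesOf g → Y') :
    Fin n × Fin n → Y' :=
  fun e => if h : e ∈ edgesOf g then z ⟨e, h⟩ else Classical.arbitrary Y'

lemma extendObs_coe [Nonempty Y'] {n : ℕ} {g : Fin n → Fin n → Bool} (z : edgesOf g → Y')
    (e : edgesOf g) : extendObs z e = z e := by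
  simp [extendObs]

lemma empEdge_extendObs [Fintype X] [Fintype Y'] [Nonempty Y'] {n : ℕ}
    (g : Fin n → Fin n → Bool) (p : (Fin n → X) × (edgesOf g → Y')) (x1 x2 : X) (b : Y') :
    empEdge g p.1 (extendObs p.2) x1 x2 b =
      ((edgesOf g).card : ℝ)⁻¹ * edgeCount g x1 x2 b p := by
  rw [empEdge, edgeCount, Finset.card_filter, ← Finset.sum_coe_sort]
  simp [extendObs_coe]

lemma dTVedge_congr [Fintype X] [Fintype Y'] (Q : X → X → Y' → ℝ) {n : ℕ}
    (g : Fin n → Fin n → Bool) (θ : Fin n → X) {y y' : Fin n × Fin n → Y'}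
    (h : ∀ e ∈ edgesOf g, y e = y' e) : dTVedge Q g θ y = dTVedge Q g θ y' := by
  have hemp : ∀ x1 x2 b, empEdge g θ y x1 x2 b = empEdge g θ y' x1 x2 b := by
    intro x1 x2 b
    unfold empEdge
    rw [Finset.filter_congr fun e he => by rw [h e he]]
  simp only [dTVedge, hemp]

/-- Conditional probability, given a regular graph, that the labels are atypical. -/
lemma sum_condWeight_atypical_le [Fintype X] [Nonempty X] [Fintype Y'] [Nonempty Y']
    {Q : X → X → Y' → ℝ}
    (hQ : ∀ x1 x2 y, 0 ≤ Q x1 x2 y) (hQ1 : ∀ x1 x2, ∑ y, Q x1 x2 y = 1)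
    {n k : ℕ} (hn : 1 ≤ n) (hk : 1 ≤ k) {g : Fin n → Fin n → Bool} (hg : IsRegAdj n k g)
    {K : ℝ} (hK : K = (Fintype.card X : ℝ) * Fintype.card X * Fintype.card Y') :
    ∑ p with ηseq n < dTVedge Q g p.1 (extendObs p.2), condWeight Q g p ≤
      2 * K * Real.exp (-(Real.log n ^ 2 / (4 * K ^ 2))) := by
  have hKpos : 0 < K := by
    have h1 : 0 < Fintype.card X := Fintype.card_pos
    have h2 : 0 < Fintype.card Y' := Fintype.card_pos
    rw [hK]; positivity
  have hn0 : (0 : ℝ) < n := by exact_mod_cast hn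
  have hk0 : (0 : ℝ) < k := by exact_mod_cast hk
  have hm : 2 * ((edgesOf g).card : ℝ) = n * k := by exact_mod_cast hg.two_mul_card_edgesOf
  set m : ℝ := ((edgesOf g).card : ℝ) with hmdef
  have hm0 : 0 < m := by nlinarith [mul_pos hn0 hk0]
  set t : ℝ := 2 * ηseq n / K with ht
  have hη : 0 ≤ ηseq n :=
    div_nonneg (Real.log_nonneg (by exact_mod_cast hn)) (Real.sqrt_nonneg _)
  have ht0 : 0 ≤ t := by positivity
  have hη2 : ηseq n ^ 2 * n = Real.log n ^ 2 := by
    rw [ηseq, div_pow, Real.sq_sqrt hn0.le]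
    field_simp
  set B : X × X × Y' → Finset ((Fin n → X) × (edgesOf g → Y')) := fun a =>
    Finset.univ.filter fun p : (Fin n → X) × (edgesOf g → Y') =>
      t * m < |edgeCount g a.1 a.2.1 a.2.2 p - m * nuBarE Q a.1 a.2.1 a.2.2| with hB
  have hsub : (Finset.univ.filter fun p : (Fin n → X) × (edgesOf g → Y') =>
      ηseq n < dTVedge Q g p.1 (extendObs p.2)) ⊆ Finset.univ.biUnion B := by
    intro p hp
    by_contra hcon
    have hp : ηseq n < dTVedge Q g p.1 (extendObs p.2) := by simpa using hp
    have hall : ∀ x1 x2 b, |empEdge g p.1 (extendObs p.2) x1 x2 b - nuBarE Q x1 x2 b| ≤ t := by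
      intro x1 x2 b
      by_contra hlt
      refine hcon (Finset.mem_biUnion.mpr ⟨(x1, x2, b), Finset.mem_univ _, ?_⟩)
      simp only [hB, Finset.mem_filter, Finset.mem_univ, true_and]
      rw [empEdge_extendObs, not_le] at hlt
      calc t * m < |m⁻¹ * edgeCount g x1 x2 b p - nuBarE Q x1 x2 b| * m := by gcongr
        _ = |(m⁻¹ * edgeCount g x1 x2 b p - nuBarE Q x1 x2 b) * m| := by
            rw [abs_mul, abs_of_pos hm0]
        _ = _ := by congr 1; field_simp
    refine absurd hp (not_lt.mpr ?_)
    calc dTVedge Q g p.1 (extendObs p.2)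
        ≤ 2⁻¹ * ∑ _x1 : X, ∑ _x2 : X, ∑ _b : Y', t := by
          unfold dTVedge
          gcongr
          exact hall _ _ _
      _ = 2⁻¹ * (K * t) := by
          simp only [Finset.sum_const, Finset.card_univ, nsmul_eq_mul, hK]
          ring
      _ = ηseq n := by rw [ht]; field_simp
  calc _ ≤ ∑ p ∈ Finset.univ.biUnion B, condWeight Q g p :=
        Finset.sum_le_sum_of_subset_of_nonneg hsub fun p _ _ => condWeight_nonneg hQ g p
    _ ≤ ∑ a, ∑ p ∈ B a, condWeight Q g p :=
        sum_biUnion_le _ _ _ (condWeight_nonneg hQ g)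
    _ ≤ ∑ _a : X × X × Y', 2 * Real.exp (-(Real.log n ^ 2 / (4 * K ^ 2))) := by
        refine Finset.sum_le_sum fun a _ => ?_
        refine (sum_filter_abs_gt_le (condWeight Q g) _ (condWeight_nonneg hQ g)
          (n * (k : ℝ) ^ 2) (t * m) (by positivity) (by positivity)
          (sum_condWeight_mul_exp_le hQ hQ1 hg a.1 a.2.1 a.2.2)).trans_eq ?_
        congr 3
        rw [ht, ← hη2, show m = n * k / 2 by linarith]
        field_simp
    _ = _ := by
        simp only [Finset.sum_const, Finset.card_univ, nsmul_eq_mul, Fintype.card_prod, hK]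
        push_cast
        ring

/-- In the observation model, the true labels are atypical with probability at most the
worst conditional probability given a regular graph. -/
lemma RegSpace.IsRegModel.measureReal_atypical_le [Fintype X] [Fintype Y'] [Nonempty Y']
    {Q : X → X → Y' → ℝ} {n k : ℕ} {M : RegSpace X Y' n} (hM : M.IsRegModel Q k) {η ε : ℝ}
    (hε : 0 ≤ ε)
    (hcond : ∀ g : Fin n → Fin n → Bool, IsRegAdj n k g →
      ∑ p with η < dTVedge Q g p.1 (extendObs p.2), condWeight Q g p ≤ ε) :
    M.P.real {ω | M.θ0 ω ∉ typicalSet Q η (M.G ω) (fun e => M.Yobs e ω)} ≤ ε := by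
  obtain ⟨hprob, -, hG, -, -, hreg, hlaw⟩ := hM
  set N : ℝ := (Nat.card {g' : Fin n → Fin n → Bool // IsRegAdj n k g'} : ℝ) with hN
  set ev : (g : Fin n → Fin n → Bool) → (Fin n → X) × (edgesOf g → Y') → Set M.Ω :=
    fun g p => {ω | M.G ω = g ∧ M.θ0 ω = p.1 ∧ ∀ e ∈ edgesOf g, M.Yobs e ω = extendObs p.2 e}
    with hev
  have hev_prob : ∀ g, IsRegAdj n k g → ∀ p, M.P.real (ev g p) = N⁻¹ * condWeight Q g p := by
    intro g hg p
    rw [measureReal_def, hlaw g hg p.1 (edgesOf g) (fun _ h => h) (extendObs p.2), condWeight,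
      mul_assoc, ← Finset.prod_coe_sort]
    simp only [extendObs_coe]
  have hnull : M.P.real {ω | IsRegAdj n k (M.G ω)}ᶜ = 0 := by
    have hmeas : MeasurableSet {ω | IsRegAdj n k (M.G ω)} :=
      hG (MeasurableSpace.measurableSet_top (s := {g | IsRegAdj n k g}))
    rw [measureReal_def, (prob_compl_eq_zero_iff hmeas).mpr hreg, ENNReal.toReal_zero]
  have hsub : {ω | M.θ0 ω ∉ typicalSet Q η (M.G ω) (fun e => M.Yobs e ω)} ⊆
      {ω | IsRegAdj n k (M.G ω)}ᶜ ∪ ⋃ g : {g : Fin n → Fin n → Bool // IsRegAdj n k g},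
        ⋃ p ∈ Finset.univ.filter fun p : (Fin n → X) × (edgesOf g.1 → Y') =>
          η < dTVedge Q g.1 p.1 (extendObs p.2), ev g.1 p := by
    intro ω hω
    by_cases hr : IsRegAdj n k (M.G ω)
    · right
      set z : edgesOf (M.G ω) → Y' := fun e => M.Yobs e ω with hz
      have hagree : ∀ e ∈ edgesOf (M.G ω), M.Yobs e ω = extendObs z e := fun e he =>
        (extendObs_coe z ⟨e, he⟩).symm
      refine Set.mem_iUnion.mpr ⟨⟨M.G ω, hr⟩, Set.mem_iUnion₂.mpr ⟨(M.θ0 ω, z), ?_, ?_⟩⟩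
      · simp only [Finset.mem_filter, Finset.mem_univ, true_and]
        rw [← dTVedge_congr Q (M.G ω) (M.θ0 ω) hagree]
        exact not_le.mp hω
      · exact ⟨rfl, rfl, hagree⟩
    · exact Or.inl hr
  calc _ ≤ _ := measureReal_mono hsub
    _ ≤ _ := measureReal_union_le _ _
    _ ≤ 0 + ∑ g : {g : Fin n → Fin n → Bool // IsRegAdj n k g}, N⁻¹ * ε := by
        rw [hnull]
        gcongr
        refine (measureReal_iUnion_fintype_le _).trans (Finset.sum_le_sum fun g _ => ?_)
        refine (measureReal_biUnion_finset_le _ _).trans ?_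
        rw [Finset.sum_congr rfl fun p _ => hev_prob g.1 g.2 p, ← Finset.mul_sum]
        gcongr
        exact hcond g.1 g.2
    _ = (N * N⁻¹) * ε := by
        simp [hN, Nat.card_eq_fintype_card, mul_assoc]
    _ ≤ ε := mul_le_of_le_one_left hε mul_inv_le_one

/-- Lemma: the typical set contains the truth w.h.p.. -/
theorem statement_10
    {X Y' : Type*} [Fintype X] [Fintype Y'] [Nonempty X] [Nonempty Y']
    (hcard : 2 ≤ Fintype.card X) :
    ∃ c₀ : ℝ, 0 < c₀ ∧
      ∀ (Q : X → X → Y' → ℝ), (∀ x1 x2 y, 0 ≤ Q x1 x2 y) →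
        (∀ x1 x2, ∑ y, Q x1 x2 y = 1) →
      ∀ k : ℕ, 3 ≤ k →
      ∀ n : ℕ, Even (n * k) →
      ∀ M : RegSpace X Y' n, M.IsRegModel Q k →
        1 - c₀⁻¹ * Real.exp (-c₀ * (Real.log n) ^ 2) ≤
          (M.P {ω | M.θ0 ω ∈
            typicalSet Q (ηseq n) (M.G ω) (fun e => M.Yobs e ω)}).toReal := by
  obtain ⟨K, hK⟩ : ∃ K : ℝ, K = (Fintype.card X : ℝ) * Fintype.card X * Fintype.card Y' := ⟨_, rfl⟩
  have hK1 : 1 ≤ K := by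
    have h1 : 1 ≤ Fintype.card X := Fintype.card_pos
    have h2 : 1 ≤ Fintype.card Y' := Fintype.card_pos
    rw [hK]
    exact_mod_cast Nat.mul_pos (Nat.mul_pos h1 h1) h2
  refine ⟨1 / (4 * K ^ 2), by positivity, ?_⟩
  intro Q hQ hQ1 k hk n _ M hM
  have hinv : (1 / (4 * K ^ 2))⁻¹ = 4 * K ^ 2 := by rw [one_div, inv_inv]
  rw [hinv]
  rcases Nat.eq_zero_or_pos n with rfl | hn
  · have h0 : 1 - 4 * K ^ 2 * Real.exp (-(1 / (4 * K ^ 2)) * Real.log (0 : ℕ) ^ 2) ≤ 0 := by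
      simp only [Nat.cast_zero, Real.log_zero, ne_eq, OfNat.ofNat_ne_zero, not_false_eq_true,
        zero_pow, mul_zero, Real.exp_zero]
      nlinarith
    exact h0.trans ENNReal.toReal_nonneg
  · have hprob : IsProbabilityMeasure M.P := hM.1
    have hbad := hM.measureReal_atypical_le (η := ηseq n)
      (ε := 2 * K * Real.exp (-(Real.log n ^ 2 / (4 * K ^ 2)))) (by positivity)
      fun g hg => sum_condWeight_atypical_le hQ hQ1 hn (by omega) hg hK
    set S : Set M.Ω := {ω | M.θ0 ω ∈ typicalSet Q (ηseq n) (M.G ω) (fun e => M.Yobs e ω)} with hS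
    have htot : 1 ≤ M.P.real S + M.P.real Sᶜ := by
      have := measureReal_union_le (μ := M.P) S Sᶜ
      rwa [Set.union_compl_self, probReal_univ] at this
    have hle : 2 * K * Real.exp (-(Real.log n ^ 2 / (4 * K ^ 2))) ≤
        4 * K ^ 2 * Real.exp (-(1 / (4 * K ^ 2)) * Real.log n ^ 2) := by
      rw [show -(1 / (4 * K ^ 2)) * Real.log n ^ 2 = -(Real.log n ^ 2 / (4 * K ^ 2)) by ring]
      exact mul_le_mul_of_nonneg_right (by nlinarith) (Real.exp_nonneg _)
    have hbad' : M.P.real Sᶜ ≤ _ := hbad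
    change _ ≤ M.P.real S
    linarith

end
end
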